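/- For x ≥ 3, S_3(x) = (log log x + c_1)^3 − (π²/2)(log log x + c_1) + 2ζ(3) + O((log log x)^2 / log x), where ζ(3) is the value of the Riemann zeta function at 3. -/

import Mathlib

/-!
Write `P(u) = ∑_{log p ≤ u} 1/p`. Since `log (p q r) = log p + log q + log r`, the sum `S₃(x)` is
the distribution function at `u = log x` of the triple additive convolution of the discrete measure
`∑ (1/p) δ_{log p}`. The theorem follows from the strong form of Mertens' second theorem and two
applications of the Dirichlet hyperbola method.

*Mertens' theorem* (`mertens_P`): `P(v) = log v + c₁ + O(1 / (√v + v))` for all `v > 0`. Legendre's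
formula for `N!` and Chebyshev's bound give `∑_{log p ≤ u} log p / p = u + O(1)`, and partial
summation gives the claim with some constant. The constant is identified by an Abelian argument: the Laplace transform
of `P` at `s` is `1/s` times the prime zeta function at `1 + s`, which by the Euler product is
`log ζ(1 + s)` minus the contribution of the higher prime powers, while the Laplace transform of
`log v` produces `-γ`.

*Convolution* (`Approx.conv_err`): if two distribution functions have smooth approximations `a`,
`b` (with errors of size `1/v` up to powers of `log v`), then with `h = u/2` the hyperbola formula,
partial summation and the replacement of each distribution function by its approximation give
`a(h) b(h) + ∫₀ʰ a(v) b'(u - v) dv + ∫₀ʰ b(v) a'(u - v) dv` for the convolution, with an error of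
size `1/u` up to powers of `log u`. The error near the origin is kept integrable by the weight
`1/√v`; one extra logarithm comes from `∫₀ʰ dv / (√v + v)`.

*Main terms* (`convMain_one`, `convMain_two`): after the substitution `v = u w` these are
polynomials in `Λ = log u + c₁` with coefficients given by logarithmic integrals over `(0, 1/2)`.
Integration by parts and `w ↦ 1 - w` reduce those to `∫₀¹ log w / (1 - w) = -ζ(2)` and
`∫₀¹ log² w / (1 - w) = 2 ζ(3)`, which come from the geometric series. The result is `Λ² - π²/6`
for two primes and `Λ³ - (π²/2) Λ + 2 ζ(3)` for three.
-/

open Real Finset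

/-- Mertens' constant `c₁ = γ - ∑ₚ (log(1/(1-1/p)) - 1/p)`. -/
noncomputable def mertensC1 : ℝ :=
  Real.eulerMascheroniConstant -
    ∑' p : Nat.Primes, (Real.log (1 / (1 - 1 / (p : ℝ))) - 1 / (p : ℝ))

/-- `S_k(x) = ∑_{p₁⋯p_k ≤ x} 1/(p₁⋯p_k)`, the sum over `k`-tuples of primes
with product at most `x`. -/
noncomputable def mertensS (k : ℕ) (x : ℝ) : ℝ :=
  ∑' v : Fin k → Nat.Primes,
    if ((∏ i, ((v i : ℕ) : ℝ)) ≤ x) then 1 / ∏ i, ((v i : ℕ) : ℝ) else 0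

namespace MertensProof

open MeasureTheory Filter Topology Set

/-! ### Weighted point configurations, the hyperbola formula and partial summation -/

/-- A locally finite weighted point configuration on `(0, ∞)`: the `i`-th point sits at `l i` and
carries the mass `w i ≥ 0`.  It encodes the discrete measure `∑ w i • δ_{l i}`. -/
structure WFam (ι : Type) where
  w : ι → ℝ
  l : ι → ℝ
  w_nonneg : ∀ i, 0 ≤ w i
  l_pos : ∀ i, 0 < l i
  fin : ∀ u, {i | l i ≤ u}.Finite

namespace WFam

variable {ι κ : Type}

/-- The indices of the points lying in `(0, u]`. -/
noncomputable def trunc (A : WFam ι) (u : ℝ) : Finset ι := (A.fin u).toFinset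

@[simp] lemma mem_trunc (A : WFam ι) {u : ℝ} {i : ι} : i ∈ A.trunc u ↔ A.l i ≤ u := by
  simp [trunc]

/-- The distribution function `u ↦ mass of (0, u]`. -/
noncomputable def cdf (A : WFam ι) (u : ℝ) : ℝ := ∑ i ∈ A.trunc u, A.w i

lemma trunc_mono (A : WFam ι) : Monotone A.trunc := fun _ _ h i hi => by
  simp only [mem_trunc] at *; linarith

lemma cdf_mono (A : WFam ι) : Monotone A.cdf := fun _ _ h =>
  sum_le_sum_of_subset_of_nonneg (A.trunc_mono h) fun i _ _ => A.w_nonneg i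

lemma cdf_nonneg (A : WFam ι) (u : ℝ) : 0 ≤ A.cdf u := sum_nonneg fun i _ => A.w_nonneg i

lemma cdf_eq_zero (A : WFam ι) {u : ℝ} (h : ∀ i, u < A.l i) : A.cdf u = 0 := by
  refine sum_eq_zero fun i hi => ?_
  have := h i
  simp only [mem_trunc] at hi
  linarith

lemma cdf_intervalIntegrable (A : WFam ι) (a b : ℝ) : IntervalIntegrable A.cdf volume a b :=
  A.cdf_mono.intervalIntegrable

/-- The additive convolution of two configurations. -/
noncomputable def conv (A : WFam ι) (B : WFam κ) : WFam (ι × κ) where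
  w x := A.w x.1 * B.w x.2
  l x := A.l x.1 + B.l x.2
  w_nonneg x := mul_nonneg (A.w_nonneg _) (B.w_nonneg _)
  l_pos x := add_pos (A.l_pos _) (B.l_pos _)
  fin u := ((A.fin u).prod (B.fin u)).subset fun x hx => by
    have h1 := A.l_pos x.1
    have h2 := B.l_pos x.2
    simp only [Set.mem_ofPred_eq, Set.mem_prod] at *
    constructor <;> linarith

/-- Dirichlet's hyperbola method: a pair with `l₁ + l₂ ≤ 2 h` has `l₁ ≤ h` or `l₂ ≤ h`. -/
lemma hyperbola (A : WFam ι) (B : WFam κ) (h : ℝ) :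
    (A.conv B).cdf (2 * h) = ∑ i ∈ A.trunc h, A.w i * B.cdf (2 * h - A.l i)
      + ∑ j ∈ B.trunc h, B.w j * A.cdf (2 * h - B.l j) - A.cdf h * B.cdf h := by
  classical
  set s := A.trunc (2 * h)
  set t := B.trunc (2 * h)
  have e0 : (A.conv B).cdf (2 * h) = ∑ i ∈ s, ∑ j ∈ t,
      if A.l i + B.l j ≤ 2 * h then A.w i * B.w j else 0 := by
    rw [← Finset.sum_product' s t
      (fun i j => if A.l i + B.l j ≤ 2 * h then A.w i * B.w j else 0), ← Finset.sum_filter]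
    refine Finset.sum_congr ?_ fun x _ => rfl
    ext x
    have h1 := A.l_pos x.1
    have h2 := B.l_pos x.2
    simp only [mem_trunc, Finset.mem_filter, Finset.mem_product, s, t, conv]
    constructor
    · intro h; exact ⟨⟨by linarith, by linarith⟩, h⟩
    · exact fun h => h.2
  have e1 : ∑ i ∈ A.trunc h, A.w i * B.cdf (2 * h - A.l i) = ∑ i ∈ s, ∑ j ∈ t,
      if A.l i ≤ h ∧ A.l i + B.l j ≤ 2 * h then A.w i * B.w j else 0 := by
    rw [show A.trunc h = s.filter (fun i => A.l i ≤ h) from ?_, Finset.sum_filter]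
    · refine Finset.sum_congr rfl fun i _ => ?_
      split_ifs with hi
      · rw [show B.cdf (2 * h - A.l i) = ∑ j ∈ t, if A.l i + B.l j ≤ 2 * h then B.w j else 0 from ?_]
        · simp [hi, Finset.mul_sum]
        · rw [← Finset.sum_filter, cdf]
          refine Finset.sum_congr ?_ fun _ _ => rfl
          ext j
          have h1 := A.l_pos i
          simp only [mem_trunc, Finset.mem_filter, t]
          constructor
          · intro h; constructor <;> linarith
          · intro h; linarith [h.2]
      · simp [hi]
    · ext i
      have := A.l_pos i
      simp only [mem_trunc, Finset.mem_filter, s]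
      constructor
      · intro h; constructor <;> linarith
      · exact fun h => h.2
  have e2 : ∑ j ∈ B.trunc h, B.w j * A.cdf (2 * h - B.l j) = ∑ i ∈ s, ∑ j ∈ t,
      if B.l j ≤ h ∧ A.l i + B.l j ≤ 2 * h then A.w i * B.w j else 0 := by
    rw [Finset.sum_comm]
    rw [show B.trunc h = t.filter (fun i => B.l i ≤ h) from ?_, Finset.sum_filter]
    · refine Finset.sum_congr rfl fun i _ => ?_
      split_ifs with hi
      · rw [show A.cdf (2 * h - B.l i) = ∑ j ∈ s, if A.l j + B.l i ≤ 2 * h then A.w j else 0 from ?_]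
        · simp [hi, Finset.mul_sum, mul_comm]
        · rw [← Finset.sum_filter, cdf]
          refine Finset.sum_congr ?_ fun _ _ => rfl
          ext j
          have h1 := B.l_pos i
          simp only [mem_trunc, Finset.mem_filter, s]
          constructor
          · intro h; constructor <;> linarith
          · intro h; linarith [h.2]
      · simp [hi]
    · ext i
      have := B.l_pos i
      simp only [mem_trunc, Finset.mem_filter, t]
      constructor
      · intro h; constructor <;> linarith
      · exact fun h => h.2
  have e3 : A.cdf h * B.cdf h = ∑ i ∈ s, ∑ j ∈ t,
      if A.l i ≤ h ∧ B.l j ≤ h then A.w i * B.w j else 0 := by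
    rw [← Finset.sum_product' s t
      (fun i j => if A.l i ≤ h ∧ B.l j ≤ h then A.w i * B.w j else 0), ← Finset.sum_filter,
      cdf, cdf, Finset.sum_mul_sum, ← Finset.sum_product']
    refine Finset.sum_congr ?_ fun _ _ => rfl
    ext x
    have h1 := A.l_pos x.1
    have h2 := B.l_pos x.2
    simp only [mem_trunc, Finset.mem_filter, Finset.mem_product, s, t]
    constructor
    · intro h; refine ⟨⟨?_, ?_⟩, h⟩ <;> linarith [h.1, h.2]
    · exact fun h => h.2
  rw [e0, e1, e2, e3, ← Finset.sum_add_distrib, ← Finset.sum_sub_distrib]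
  refine Finset.sum_congr rfl fun i _ => ?_
  rw [← Finset.sum_add_distrib, ← Finset.sum_sub_distrib]
  refine Finset.sum_congr rfl fun j _ => ?_
  by_cases h1 : A.l i ≤ h <;> by_cases h2 : B.l j ≤ h
  · have : A.l i + B.l j ≤ 2 * h := by linarith
    simp [h1, h2, this]
  · simp [h1, h2]
  · simp [h1, h2]
  · have : ¬ A.l i + B.l j ≤ 2 * h := by push Not at *; linarith
    simp [h1, h2, this]

/-- Partial summation against the distribution function, with no boundary term at `a` as long as
`g` is differentiable on `[a, h]` and all points lie to the right of `a`. -/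
lemma abel (A : WFam ι) {a h : ℝ} (ha : ∀ i, a ≤ A.l i) (hah : a ≤ h) {g g' : ℝ → ℝ}
    (hg : ∀ v ∈ Set.Icc a h, HasDerivAt g (g' v) v) (hint : IntervalIntegrable g' volume a h) :
    ∑ i ∈ A.trunc h, A.w i * g (A.l i) = g h * A.cdf h - ∫ v in a..h, A.cdf v * g' v := by
  classical
  have key : ∀ i ∈ A.trunc h, A.w i * g (A.l i) = A.w i * g h -
      ∫ v in a..h, (if A.l i ≤ v then A.w i else 0) * g' v := by
    intro i hi
    rw [mem_trunc] at hi
    have hsub : Set.Icc (A.l i) h ⊆ Set.Icc a h := Set.Icc_subset_Icc_left (ha i)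
    have i1 : IntervalIntegrable g' volume (A.l i) h := hint.mono_set (by
      rw [Set.uIcc_of_le hi, Set.uIcc_of_le hah]; exact hsub)
    have h1 : ∫ v in (A.l i)..h, g' v = g h - g (A.l i) := by
      refine intervalIntegral.integral_eq_sub_of_hasDerivAt (fun v hv => hg v ?_) i1
      rw [Set.uIcc_of_le hi] at hv
      exact hsub hv
    have h2 : ∫ v in a..h, (if A.l i ≤ v then A.w i else 0) * g' v
        = A.w i * ∫ v in (A.l i)..h, g' v := by
      rw [intervalIntegral.integral_of_le hah, intervalIntegral.integral_of_le hi,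
        ← MeasureTheory.integral_Icc_eq_integral_Ioc (x := A.l i),
        ← MeasureTheory.integral_Icc_eq_integral_Ioc (x := a),
        ← MeasureTheory.integral_const_mul]
      have : ∀ v, (if A.l i ≤ v then A.w i else 0) * g' v
          = Set.indicator (Set.Ici (A.l i)) (fun v => A.w i * g' v) v := by
        intro v; simp [Set.indicator_apply]
      simp_rw [this]
      rw [MeasureTheory.setIntegral_indicator measurableSet_Ici]
      congr 2
      ext v
      have := ha i
      simp only [Set.mem_inter_iff, Set.mem_Icc, Set.mem_Ici]
      constructor
      · rintro ⟨⟨_, h1⟩, h2⟩; exact ⟨h2, h1⟩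
      · rintro ⟨h1, h2⟩; exact ⟨⟨by linarith, h2⟩, h1⟩
    rw [h2, h1]; ring
  rw [Finset.sum_congr rfl key, Finset.sum_sub_distrib, ← Finset.sum_mul,
    ← intervalIntegral.integral_finsetSum]
  · rw [mul_comm (g h)]
    congr 1
    refine intervalIntegral.integral_congr fun v hv => ?_
    rw [Set.uIcc_of_le hah] at hv
    simp only [← Finset.sum_mul]
    congr 1
    rw [← Finset.sum_filter, cdf]
    refine Finset.sum_congr ?_ fun _ _ => rfl
    ext i
    simp only [Finset.mem_filter, mem_trunc]
    constructor
    · exact fun h => h.2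
    · exact fun h => ⟨h.trans hv.2, h⟩
  · intro i _
    have : (fun v => (if A.l i ≤ v then A.w i else 0) * g' v)
          = Set.indicator (Set.Ici (A.l i)) (fun v => A.w i * g' v) := by
        ext v; simp [Set.indicator_apply]
    rw [this]
    rw [intervalIntegrable_iff] at *
    exact (hint.const_mul _).indicator measurableSet_Ici

end WFam

/-! ### Mertens' first and second theorems -/

/-! ### Mertens' first theorem -/

lemma primes_log_fin (u : ℝ) : {p : Nat.Primes | Real.log (p : ℝ) ≤ u}.Finite := by
  have : Set.Finite {n : ℕ | n ≤ ⌊Real.exp u⌋₊} := Set.finite_le_nat _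
  refine (this.preimage (f := fun p : Nat.Primes => (p : ℕ))
    Nat.Primes.coe_nat_injective.injOn).subset fun p hp => ?_
  have h0 : (0 : ℝ) < p := by exact_mod_cast p.2.pos
  simp only [Set.mem_ofPred_eq, Set.mem_preimage] at *
  exact Nat.le_floor ((Real.log_le_iff_le_exp h0).1 hp)

lemma log_prime_pos (p : Nat.Primes) : 0 < Real.log (p : ℝ) :=
  Real.log_pos (by exact_mod_cast p.2.one_lt)

/-- The primes `p`, placed at `log p`, with mass `1 / p`. -/
noncomputable def P : WFam Nat.Primes where
  w p := 1 / (p : ℝ)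
  l p := Real.log (p : ℝ)
  w_nonneg p := by positivity
  l_pos := log_prime_pos
  fin := primes_log_fin

/-- The primes `p`, placed at `log p`, with mass `log p / p`. -/
noncomputable def LP : WFam Nat.Primes where
  w p := Real.log (p : ℝ) / (p : ℝ)
  l p := Real.log (p : ℝ)
  w_nonneg p := div_nonneg (log_prime_pos p).le (by positivity)
  l_pos := log_prime_pos
  fin := primes_log_fin

lemma sum_trunc_LP (f : ℕ → ℝ) (u : ℝ) :
    ∑ p ∈ LP.trunc u, f p = ∑ p ∈ Nat.primesLE ⌊Real.exp u⌋₊, f p := by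
  refine Finset.sum_nbij (fun p => (p : ℕ)) ?_ ?_ ?_ ?_
  · intro p hp
    have h0 : (0 : ℝ) < p := by exact_mod_cast p.2.pos
    rw [WFam.mem_trunc] at hp
    rw [Nat.mem_primesLE]
    exact ⟨Nat.le_floor ((Real.log_le_iff_le_exp h0).1 hp), p.2⟩
  · exact Nat.Primes.coe_nat_injective.injOn
  · intro p hp
    have hp' := Nat.mem_primesLE.1 (Finset.mem_coe.1 hp)
    have h0 : (0 : ℝ) < p := by exact_mod_cast hp'.2.pos
    refine ⟨(⟨p, hp'.2⟩ : Nat.Primes), Finset.mem_coe.2 ((WFam.mem_trunc LP).2 ?_), rfl⟩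
    exact (Real.log_le_iff_le_exp h0).2 ((Nat.le_floor_iff (Real.exp_pos u).le).1 hp'.1)
  · intros; rfl

lemma log_factorial_eq (N : ℕ) : Real.log (N.factorial : ℝ)
    = ∑ p ∈ Nat.primesLE N, (N.factorial.factorization p : ℝ) * Real.log p := by
  rw [Real.log_nat_eq_sum_factorization, Finsupp.sum]
  refine Finset.sum_subset ?_ ?_
  · intro p hp
    rw [Nat.support_factorization, Nat.mem_primeFactors] at hp
    rw [Nat.mem_primesLE]
    exact ⟨(hp.1.dvd_factorial).1 hp.2.1, hp.1⟩
  · intro p _ hp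
    rw [Finsupp.notMem_support_iff.1 hp]
    simp

/-- As `1 / (p - 1) - 1 / p = ∑_{k ≥ 2} p⁻ᵏ`, this bounds the contribution of the higher prime powers
to `log N! / N`. -/
lemma exists_sum_log_bound : ∃ K : ℝ, ∀ N : ℕ,
    ∑ p ∈ Nat.primesLE N, Real.log p * (1 / ((p : ℝ) - 1) - 1 / p) ≤ K := by
  have hs : Summable fun n : ℕ => 4 * (1 / (n : ℝ) ^ (3 / 2 : ℝ)) :=
    (Real.summable_one_div_nat_rpow.2 (by norm_num)).mul_left 4
  refine ⟨∑' n : ℕ, 4 * (1 / (n : ℝ) ^ (3 / 2 : ℝ)), fun N => ?_⟩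
  refine le_trans (Finset.sum_le_sum fun p hp => ?_)
    (hs.sum_le_tsum (Nat.primesLE N) fun i _ => by positivity)
  have hp2 : (2 : ℝ) ≤ p := by exact_mod_cast (Nat.mem_primesLE.1 hp).2.two_le
  have h1 : Real.log p ≤ 2 * (p : ℝ) ^ (1 / 2 : ℝ) := by
    have := Real.log_le_rpow_div (x := p) (by positivity) (ε := 1 / 2) (by norm_num)
    linarith
  have h2 : 1 / ((p : ℝ) - 1) - 1 / p ≤ 2 / (p : ℝ) ^ (2 : ℕ) := by
    rw [div_sub_div _ _ (by linarith) (by linarith),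
      div_le_div_iff₀ (mul_pos (by linarith) (by linarith)) (by positivity)]
    nlinarith
  have h3 : (p : ℝ) ^ (2 : ℕ) = (p : ℝ) ^ (3 / 2 : ℝ) * (p : ℝ) ^ (1 / 2 : ℝ) := by
    rw [← Real.rpow_add (by linarith)]; norm_num
  have h4 : 0 ≤ 1 / ((p : ℝ) - 1) - 1 / p := by
    rw [sub_nonneg]
    exact one_div_le_one_div_of_le (by linarith) (by linarith)
  have h5 : (0 : ℝ) < (p : ℝ) ^ (1 / 2 : ℝ) := by positivity
  have h6 : (0 : ℝ) < (p : ℝ) ^ (3 / 2 : ℝ) := by positivity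
  calc Real.log p * (1 / ((p : ℝ) - 1) - 1 / p)
      ≤ (2 * (p : ℝ) ^ (1 / 2 : ℝ)) * (2 / (p : ℝ) ^ (2 : ℕ)) := by
        refine mul_le_mul h1 h2 h4 (by positivity)
    _ = 4 * (1 / (p : ℝ) ^ (3 / 2 : ℝ)) := by
        rw [h3]; field_simp; norm_num

/-- Legendre's formula for `N!` and Chebyshev's bound `θ(N) ≪ N` give Mertens' first theorem at
integers. -/
lemma mertens_first_nat : ∃ K : ℝ, ∀ N : ℕ, 1 ≤ N →
    |∑ p ∈ Nat.primesLE N, Real.log p / p - Real.log N| ≤ K := by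
  obtain ⟨K, hK⟩ := exists_sum_log_bound
  refine ⟨max (Real.log 4) (K + 1), fun N hN => ?_⟩
  have hN0 : (0 : ℝ) < N := by exact_mod_cast hN
  have hup : Real.log (N.factorial : ℝ) ≤ N * Real.log N := by
    rw [← Real.log_pow]
    exact Real.log_le_log (by exact_mod_cast N.factorial_pos) (by exact_mod_cast N.factorial_le_pow)
  have hlo : N * Real.log N - N ≤ Real.log (N.factorial : ℝ) := by
    have h := Real.pow_div_factorial_le_exp (x := N) hN0.le N
    have hf : (0 : ℝ) < N.factorial := by exact_mod_cast N.factorial_pos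
    have h' := Real.log_le_log (by positivity) h
    rw [Real.log_exp, Real.log_div (by positivity) (by positivity), Real.log_pow] at h'
    linarith
  -- Legendre's formula: the exponent of `p` in `N!` lies between `N / p - 1` and `N / (p - 1)`.
  have hle : ∀ p ∈ Nat.primesLE N, (N.factorial.factorization p : ℝ) * Real.log p
      ≤ N * (Real.log p / p) + N * (Real.log p * (1 / ((p : ℝ) - 1) - 1 / p)) := by
    intro p hp
    have hpp := (Nat.mem_primesLE.1 hp).2
    have hp2 : (2 : ℝ) ≤ p := by exact_mod_cast hpp.two_le
    have h1 : (N.factorial.factorization p : ℝ) ≤ N / ((p : ℝ) - 1) := by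
      refine le_trans (Nat.cast_le.2 (Nat.factorization_factorial_le_div_pred hpp N)) ?_
      refine Nat.cast_div_le.trans (le_of_eq ?_)
      rw [Nat.cast_sub hpp.one_le]; simp
    have h2 : 0 ≤ Real.log p := Real.log_nonneg (by linarith)
    calc _ ≤ N / ((p : ℝ) - 1) * Real.log p := by gcongr
      _ = _ := by ring
  have hge : ∀ p ∈ Nat.primesLE N, N * (Real.log p / p) - Real.log p
      ≤ (N.factorial.factorization p : ℝ) * Real.log p := by
    intro p hp
    have hpp := (Nat.mem_primesLE.1 hp).2
    have hpN := (Nat.mem_primesLE.1 hp).1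
    have hp2 : (2 : ℝ) ≤ p := by exact_mod_cast hpp.two_le
    have h2 : 0 ≤ Real.log p := Real.log_nonneg (by linarith)
    have h1 : N / p ≤ N.factorial.factorization p := by
      rw [Nat.factorization_factorial hpp (Nat.lt_succ_self (Nat.log p N))]
      have hmem : 1 ∈ Finset.Ico 1 (Nat.log p N).succ := by
        rw [Finset.mem_Ico]
        exact ⟨le_rfl, Nat.succ_lt_succ (Nat.log_pos hpp.one_lt hpN)⟩
      have := Finset.single_le_sum (f := fun i => N / p ^ i) (fun i _ => Nat.zero_le _) hmem
      simpa using this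
    have h3 : (N : ℝ) / p - 1 ≤ (N.factorial.factorization p : ℝ) := by
      have h4 : ((N / p : ℕ) : ℝ) ≤ (N.factorial.factorization p : ℝ) := by exact_mod_cast h1
      have h5 := Nat.lt_floor_add_one ((N : ℝ) / p)
      rw [Nat.floor_div_natCast, Nat.floor_natCast] at h5
      linarith
    calc N * (Real.log p / p) - Real.log p = ((N : ℝ) / p - 1) * Real.log p := by ring
      _ ≤ _ := by gcongr
  have h1 := Finset.sum_le_sum hle
  have h2 := Finset.sum_le_sum hge
  rw [← log_factorial_eq, Finset.sum_add_distrib, ← Finset.mul_sum, ← Finset.mul_sum] at h1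
  rw [← log_factorial_eq, Finset.sum_sub_distrib, ← Finset.mul_sum] at h2
  have h3 : ∑ p ∈ Nat.primesLE N, Real.log p ≤ Real.log 4 * N := by
    rw [← Chebyshev.theta_eq_sum_primesLE_log]
    exact Chebyshev.theta_le_log4_mul_x hN0.le
  have h4 := hK N
  set S := ∑ p ∈ Nat.primesLE N, Real.log p / p
  rw [abs_le]
  constructor
  · refine le_trans (neg_le_neg (le_max_right _ _)) ?_
    have : N * Real.log N - N ≤ N * S + N * K := by
      refine (hlo.trans h1).trans ?_
      gcongr
    have : N * (Real.log N - 1) ≤ N * (S + K) := by linarith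
    have := le_of_mul_le_mul_left this hN0
    linarith
  · refine le_trans ?_ (le_max_left _ _)
    have : N * S ≤ N * (Real.log N + Real.log 4) := by linarith
    have := le_of_mul_le_mul_left this hN0
    linarith

lemma mertens_first : ∃ K : ℝ, 0 ≤ K ∧ ∀ u : ℝ, 0 ≤ u → |LP.cdf u - u| ≤ K := by
  obtain ⟨K, hK⟩ := mertens_first_nat
  have hl2 : 0 < Real.log 2 := Real.log_pos (by norm_num)
  have hK0 : 0 ≤ K := (abs_nonneg _).trans (hK 1 le_rfl)
  refine ⟨K + Real.log 2, by linarith, fun u hu => ?_⟩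
  set N := ⌊Real.exp u⌋₊
  have he : 1 ≤ Real.exp u := Real.one_le_exp hu
  have hN : 1 ≤ N := Nat.le_floor (by simpa using he)
  have hNR : (1 : ℝ) ≤ N := by exact_mod_cast hN
  have hN1 : (N : ℝ) ≤ Real.exp u := Nat.floor_le (Real.exp_pos u).le
  have hN2 : Real.exp u ≤ 2 * N := by
    have := Nat.lt_floor_add_one (Real.exp u)
    linarith
  have h1 : Real.log N ≤ u := (Real.log_le_iff_le_exp (by linarith)).2 hN1
  have h2 : u ≤ Real.log 2 + Real.log N := by
    rw [← Real.log_mul (by norm_num) (by linarith), Real.le_log_iff_exp_le (by linarith)]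
    exact hN2
  have h3 : LP.cdf u = ∑ p ∈ Nat.primesLE N, Real.log p / p := by
    rw [WFam.cdf]
    exact sum_trunc_LP (fun p => Real.log p / p) u
  have h4 := abs_le.1 (hK N hN)
  rw [h3, abs_le]
  constructor <;> linarith [h4.1, h4.2]

/-! ### Mertens' second theorem, with an unidentified constant -/

lemma log_two_le_log_prime (p : Nat.Primes) : Real.log 2 ≤ Real.log (p : ℝ) :=
  Real.log_le_log (by norm_num) (by exact_mod_cast p.2.two_le)

/-- Partial summation: the masses `1 / p` are the masses `log p / p` divided by the position. -/
lemma P_cdf_eq {u : ℝ} (hu : Real.log 2 ≤ u) :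
    P.cdf u = LP.cdf u / u + ∫ v in (Real.log 2)..u, LP.cdf v / v ^ 2 := by
  have hl2 : 0 < Real.log 2 := Real.log_pos (by norm_num)
  have h := LP.abel (a := Real.log 2) (h := u) log_two_le_log_prime hu
    (g := fun v => v⁻¹) (g' := fun v => -(v ^ 2)⁻¹)
    (fun v hv => hasDerivAt_inv (by have := hv.1; linarith))
    (ContinuousOn.intervalIntegrable (by
      rw [Set.uIcc_of_le hu]
      refine ContinuousOn.neg (ContinuousOn.inv₀ (by fun_prop) fun v hv => ?_)
      have := hv.1
      have : 0 < v := by linarith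
      positivity))
  have e : P.cdf u = ∑ i ∈ LP.trunc u, LP.w i * (LP.l i)⁻¹ := by
    rw [WFam.cdf]
    refine Finset.sum_congr rfl fun p _ => ?_
    have := log_prime_pos p
    simp only [P, LP]
    field_simp
  rw [e, h]
  have : ∀ v, LP.cdf v * -(v ^ 2)⁻¹ = -(LP.cdf v / v ^ 2) := by intro v; ring
  simp_rw [this]
  rw [intervalIntegral.integral_neg]
  ring

/-- The function `P(v) - log v` satisfies a Cauchy condition with rate `1 / x`, because
`LP(v) = v + O(1)` in the partial summation formula `P_cdf_eq`. -/
lemma P_cdf_cauchy : ∃ K : ℝ, 0 ≤ K ∧ ∀ x y : ℝ, Real.log 2 ≤ x → x ≤ y →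
    |(P.cdf y - Real.log y) - (P.cdf x - Real.log x)| ≤ K / x := by
  obtain ⟨K, hK0, hK⟩ := mertens_first
  have hl2 : 0 < Real.log 2 := Real.log_pos (by norm_num)
  refine ⟨2 * K, by positivity, fun x y hx hxy => ?_⟩
  have hx0 : 0 < x := by linarith
  have hy0 : 0 < y := by linarith
  have hcont : ∀ a b : ℝ, Real.log 2 ≤ a → a ≤ b →
      ContinuousOn (fun v : ℝ => (v ^ 2)⁻¹) (Set.uIcc a b) := by
    intro a b ha hab
    rw [Set.uIcc_of_le hab]
    refine ContinuousOn.inv₀ (by fun_prop) fun v hv => ?_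
    have := hv.1
    have : 0 < v := by linarith
    positivity
  have hii : ∀ a b : ℝ, Real.log 2 ≤ a → a ≤ b →
      IntervalIntegrable (fun v => LP.cdf v / v ^ 2) volume a b := by
    intro a b ha hab
    simp_rw [div_eq_mul_inv]
    exact (LP.cdf_intervalIntegrable a b).mul_continuousOn (hcont a b ha hab)
  have hinv : IntervalIntegrable (fun v : ℝ => v⁻¹) volume x y := by
    refine ContinuousOn.intervalIntegrable (ContinuousOn.inv₀ (by fun_prop) fun v hv => ?_)
    rw [Set.uIcc_of_le hxy] at hv
    have := hv.1
    linarith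
  have e1 : ∫ v in x..y, (v : ℝ)⁻¹ = Real.log y - Real.log x := by
    rw [integral_inv_of_pos hx0 hy0, Real.log_div hy0.ne' hx0.ne']
  have e2 : ∫ v in x..y, ((v : ℝ) ^ 2)⁻¹ = 1 / x - 1 / y := by
    have := intervalIntegral.integral_eq_sub_of_hasDerivAt (a := x) (b := y)
      (f := fun v : ℝ => -v⁻¹) (f' := fun v => (v ^ 2)⁻¹)
      (fun v hv => by
        rw [Set.uIcc_of_le hxy] at hv
        have hv0 : v ≠ 0 := by have := hv.1; linarith
        exact (hasDerivAt_inv hv0).fun_neg.congr_deriv (neg_neg _))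
      ((hcont x y hx hxy).intervalIntegrable)
    rw [this]; ring
  have e3 : (P.cdf y - Real.log y) - (P.cdf x - Real.log x)
      = (LP.cdf y - y) / y - (LP.cdf x - x) / x + ∫ v in x..y, (LP.cdf v - v) / v ^ 2 := by
    rw [P_cdf_eq (hx.trans hxy), P_cdf_eq hx,
      ← intervalIntegral.integral_add_adjacent_intervals (hii _ _ le_rfl hx) (hii _ _ hx hxy)]
    have : ∫ v in x..y, (LP.cdf v - v) / v ^ 2
        = (∫ v in x..y, LP.cdf v / v ^ 2) - ∫ v in x..y, (v : ℝ)⁻¹ := by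
      rw [← intervalIntegral.integral_sub (hii _ _ hx hxy) hinv]
      refine intervalIntegral.integral_congr fun v hv => ?_
      rw [Set.uIcc_of_le hxy] at hv
      have := hv.1
      have : 0 < v := by linarith
      field_simp
    rw [this, e1]
    field_simp
    ring
  have e4 : |∫ v in x..y, (LP.cdf v - v) / v ^ 2| ≤ K * (1 / x - 1 / y) := by
    rw [← e2, ← intervalIntegral.integral_const_mul]
    refine intervalIntegral.norm_integral_le_of_norm_le (f := fun v => (LP.cdf v - v) / v ^ 2) hxy
      (Filter.Eventually.of_forall fun v hv => ?_)
      (((hcont x y hx hxy).intervalIntegrable).const_mul K)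
    have hv0 : 0 < v := by linarith [hv.1]
    rw [Real.norm_eq_abs, abs_div, abs_of_pos (by positivity : 0 < v ^ 2), div_eq_mul_inv]
    have := hK v hv0.le
    gcongr
  have e5 : |(LP.cdf y - y) / y| ≤ K / y := by
    rw [abs_div, abs_of_pos hy0]
    have := hK y hy0.le
    gcongr
  have e6 : |(LP.cdf x - x) / x| ≤ K / x := by
    rw [abs_div, abs_of_pos hx0]
    have := hK x hx0.le
    gcongr
  rw [e3]
  have : K * (1 / x - 1 / y) = K / x - K / y := by ring
  have h2 : 2 * K / x = K / x + K / x := by ring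
  rw [abs_le] at *
  constructor <;> linarith [e4.1, e4.2, e5.1, e5.2, e6.1, e6.2]

/-- Mertens' second theorem with an unspecified constant, the limit of `P(v) - log v`. -/
lemma mertens_second : ∃ c K : ℝ, 0 ≤ K ∧ ∀ u : ℝ, Real.log 2 ≤ u →
    |P.cdf u - (Real.log u + c)| ≤ K / u := by
  obtain ⟨K, hK0, hK⟩ := P_cdf_cauchy
  have hl2 : 0 < Real.log 2 := Real.log_pos (by norm_num)
  set G : ℕ → ℝ := fun n => P.cdf (n + 1) - Real.log (n + 1)
  have hl21 : Real.log 2 ≤ 1 := by linarith [Real.log_two_lt_d9]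
  have hc : CauchySeq G := by
    refine cauchySeq_of_le_tendsto_0' (fun n : ℕ => K * (1 / ((n : ℝ) + 1))) (fun n m hnm => ?_) ?_
    · rw [dist_comm, Real.dist_eq]
      have h0 : (0 : ℝ) ≤ n := Nat.cast_nonneg n
      have h1 : (n : ℝ) ≤ m := Nat.cast_le.2 hnm
      have := hK (n + 1) (m + 1) (by linarith) (by linarith)
      simpa [div_eq_mul_inv] using this
    · simpa using (tendsto_one_div_add_atTop_nhds_zero_nat (𝕜 := ℝ)).const_mul K
  obtain ⟨c, hc⟩ := cauchySeq_tendsto_of_complete hc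
  refine ⟨c, K, hK0, fun u hu => ?_⟩
  have h1 : Tendsto (fun n => |G n - (P.cdf u - Real.log u)|) atTop
      (𝓝 |c - (P.cdf u - Real.log u)|) := (hc.sub_const _).abs
  have h2 : |c - (P.cdf u - Real.log u)| ≤ K / u := by
    refine le_of_tendsto h1 ?_
    filter_upwards [eventually_ge_atTop ⌈u⌉₊] with n hn
    have : u ≤ n := (Nat.le_ceil u).trans (Nat.cast_le.2 hn)
    exact hK u (n + 1) hu (by linarith)
  rw [abs_sub_comm] at h2
  convert h2 using 2
  ring

/-! ### The constant in Mertens' second theorem -/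

lemma abs_log_le_sqrt {v : ℝ} (h0 : 0 < v) (h1 : v ≤ 1) : |Real.log v| * √v ≤ 2 := by
  have hs : 0 < √v := Real.sqrt_pos.2 h0
  rw [abs_of_nonpos (Real.log_nonpos h0.le h1)]
  have h := Real.log_le_rpow_div (x := v⁻¹) (by positivity) (ε := 1 / 2) (by norm_num)
  rw [Real.log_inv, ← Real.sqrt_eq_rpow, Real.sqrt_inv] at h
  calc -Real.log v * √v ≤ ((√v)⁻¹ / (1 / 2)) * √v := by gcongr
    _ = 2 := by field_simp

lemma cdf_P_eq_zero {v : ℝ} (h : v < Real.log 2) : P.cdf v = 0 :=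
  P.cdf_eq_zero fun p => h.trans_le (log_two_le_log_prime p)

/-- The bound `K / (√v + v)` is the usual error term `1 / v` of Mertens' theorem for large `v`, and
remains true and integrable down to `v = 0`. -/
lemma mertens_second' : ∃ c K : ℝ, 0 ≤ K ∧ ∀ v : ℝ, 0 < v →
    |P.cdf v - (Real.log v + c)| ≤ K / (√v + v) := by
  obtain ⟨c, K, hK0, hK⟩ := mertens_second
  refine ⟨c, 3 * K + (4 + 2 * |c|), by positivity, fun v hv => ?_⟩
  have hs : 0 < √v := Real.sqrt_pos.2 hv
  have hss : √v * √v = v := Real.mul_self_sqrt hv.le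
  rw [le_div_iff₀ (by positivity)]
  rcases lt_or_ge v (Real.log 2) with h | h
  · have hv1 : v ≤ 1 := by linarith [Real.log_two_lt_d9]
    have hs1 : √v ≤ 1 := Real.sqrt_le_one.2 hv1
    rw [cdf_P_eq_zero h, zero_sub, abs_neg]
    have h1 := abs_log_le_sqrt hv hv1
    have h2 : |Real.log v + c| ≤ |Real.log v| + |c| := abs_add_le _ _
    have h3 : √v + v ≤ 2 * √v := by nlinarith
    calc |Real.log v + c| * (√v + v) ≤ (|Real.log v| + |c|) * (2 * √v) := by gcongr
      _ = 2 * (|Real.log v| * √v) + 2 * |c| * √v := by ring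
      _ ≤ 2 * 2 + 2 * |c| * 1 := by gcongr
      _ ≤ _ := by linarith
  · have h1 := hK v h
    rw [le_div_iff₀ hv] at h1
    have h4 : 1 / 4 ≤ v := by linarith [Real.log_two_gt_d9]
    have h5 : 1 / 2 ≤ √v := by
      rw [Real.le_sqrt (by norm_num) hv.le]; linarith
    have h3 : √v + v ≤ 3 * v := by nlinarith
    calc _ ≤ |P.cdf v - (Real.log v + c)| * (3 * v) := by gcongr
      _ ≤ 3 * K := by linarith
      _ ≤ _ := by have := abs_nonneg c; linarith

/-! ### Identification of the constant by an Abelian argument -/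

lemma integrableOn_mul_exp {f : ℝ → ℝ} {M s : ℝ} (hs : 0 < s) (hf : Measurable f)
    (hb : ∀ v, 0 < v → |f v| ≤ M * (v ^ (-(1 / 2) : ℝ) + v)) :
    IntegrableOn (fun v => f v * Real.exp (-(s * v))) (Set.Ioi 0) := by
  have h1 := integrableOn_rpow_mul_exp_neg_mul_rpow (p := 1) (s := -(1 / 2)) (b := s)
    (by norm_num) one_pos hs
  have h2 := integrableOn_rpow_mul_exp_neg_mul_rpow (p := 1) (s := 1) (b := s)
    (by norm_num) one_pos hs
  refine Integrable.mono' ((h1.add h2).const_mul M) (by fun_prop) ?_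
  refine (ae_restrict_iff' measurableSet_Ioi).2 (Filter.Eventually.of_forall fun v hv => ?_)
  have := hb v hv
  rw [Real.norm_eq_abs, abs_mul, abs_of_pos (Real.exp_pos _)]
  simp only [Pi.add_apply, Real.rpow_one, ← add_mul, ← mul_assoc, neg_mul]
  gcongr

lemma one_le_half_add {v : ℝ} (h : 0 < v) : 1 ≤ v ^ (-(1 / 2) : ℝ) + v := by
  rcases le_total v 1 with h1 | h1
  · have := Real.one_le_rpow_of_pos_of_le_one_of_nonpos h h1 (z := -(1 / 2)) (by norm_num)
    linarith
  · have : 0 ≤ v ^ (-(1 / 2) : ℝ) := by positivity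
    linarith

lemma rpow_neg_half {v : ℝ} (h : 0 < v) : v ^ (-(1 / 2) : ℝ) = (√v)⁻¹ := by
  rw [Real.rpow_neg h.le, ← Real.sqrt_eq_rpow]

lemma abs_log_le_half_add {v : ℝ} (h : 0 < v) : |Real.log v| ≤ 2 * (v ^ (-(1 / 2) : ℝ) + v) := by
  have h0 : 0 ≤ v ^ (-(1 / 2) : ℝ) := by positivity
  rcases le_total v 1 with h1 | h1
  · have h2 := abs_log_le_sqrt h h1
    have hs : 0 < √v := Real.sqrt_pos.2 h
    rw [← le_div_iff₀ hs] at h2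
    rw [rpow_neg_half h] at *
    rw [div_eq_mul_inv] at h2
    linarith
  · rw [abs_of_nonneg (Real.log_nonneg h1)]
    have := Real.log_le_sub_one_of_pos h
    linarith

/-- `Γ'(1) = -γ`, as an integral. -/
lemma integral_log_mul_exp :
    ∫ t in Set.Ioi (0 : ℝ), Real.log t * Real.exp (-t) = -Real.eulerMascheroniConstant := by
  have h := Complex.hasDerivAt_GammaIntegral (s := 1) (by simp)
  have h2 : HasDerivAt Complex.GammaIntegral (-(Real.eulerMascheroniConstant : ℂ)) 1 := by
    refine Complex.hasDerivAt_Gamma_one.congr_of_eventuallyEq ?_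
    have : ∀ᶠ z : ℂ in 𝓝 1, 0 < z.re :=
      (Complex.continuous_re.tendsto 1).eventually (lt_mem_nhds (by simp))
    filter_upwards [this] with z hz
    exact (Complex.Gamma_eq_integral hz).symm
  have h3 := h.unique h2
  simp only [sub_self, Complex.cpow_zero, one_mul] at h3
  have h4 : ∫ t in Set.Ioi (0 : ℝ), ((Real.log t : ℂ) * (Real.exp (-t) : ℂ))
      = ((∫ t in Set.Ioi (0 : ℝ), Real.log t * Real.exp (-t) : ℝ) : ℂ) := by
    rw [← integral_complex_ofReal]
    simp
  rw [h4] at h3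
  exact_mod_cast h3

lemma integral_exp_Ioi {s : ℝ} (hs : 0 < s) :
    s * ∫ v in Set.Ioi (0 : ℝ), Real.exp (-(s * v)) = 1 := by
  have h := Real.integral_rpow_mul_exp_neg_mul_Ioi (a := 1) (r := s) one_pos hs
  simp only [sub_self, Real.rpow_zero, one_mul, Real.rpow_one, Real.Gamma_one, mul_one] at h
  rw [h]
  field_simp

/-- The Laplace transform of `log` is `-(γ + log s) / s`. -/
lemma integral_log_mul_exp_scaled {s : ℝ} (hs : 0 < s) :
    s * ∫ v in Set.Ioi (0 : ℝ), Real.log v * Real.exp (-(s * v))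
      = -Real.log s - Real.eulerMascheroniConstant := by
  have h := MeasureTheory.integral_comp_mul_left_Ioi
    (fun t => Real.log t * Real.exp (-t)) 0 hs
  rw [mul_zero, integral_log_mul_exp, smul_eq_mul] at h
  have i1 : IntegrableOn (fun v => Real.log v * Real.exp (-(s * v))) (Set.Ioi 0) :=
    integrableOn_mul_exp hs Real.measurable_log fun v hv => abs_log_le_half_add hv
  have i2 : IntegrableOn (fun v => Real.log s * Real.exp (-(s * v))) (Set.Ioi 0) :=
    integrableOn_mul_exp (M := |Real.log s|) hs measurable_const fun v hv => by
      have := one_le_half_add hv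
      have := abs_nonneg (Real.log s)
      nlinarith
  have e : ∫ v in Set.Ioi (0 : ℝ), Real.log (s * v) * Real.exp (-(s * v))
      = Real.log s * (∫ v in Set.Ioi (0 : ℝ), Real.exp (-(s * v)))
        + ∫ v in Set.Ioi (0 : ℝ), Real.log v * Real.exp (-(s * v)) := by
    rw [← MeasureTheory.integral_const_mul, ← MeasureTheory.integral_add i2 i1]
    refine setIntegral_congr_fun measurableSet_Ioi fun v hv => ?_
    have hv0 : (0 : ℝ) < v := hv
    rw [Real.log_mul hs.ne' hv0.ne']; ring
  rw [e] at h
  have h1 := integral_exp_Ioi hs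
  have : s * (Real.log s * (∫ v in Set.Ioi (0 : ℝ), Real.exp (-(s * v)))
        + ∫ v in Set.Ioi (0 : ℝ), Real.log v * Real.exp (-(s * v)))
        = -Real.eulerMascheroniConstant := by
    rw [h]; field_simp
  rw [mul_add, mul_left_comm, h1] at this
  linarith

/-- The prime zeta function at `1 + s`. -/
noncomputable def primeZeta (s : ℝ) : ℝ := ∑' p : Nat.Primes, (p : ℝ) ^ (-(1 + s))

lemma cdf_P_bound {c K : ℝ} (hK0 : 0 ≤ K)
    (hK : ∀ v : ℝ, 0 < v → |P.cdf v - (Real.log v + c)| ≤ K / (√v + v)) {v : ℝ} (hv : 0 < v) :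
    |P.cdf v| ≤ (2 + |c| + K) * (v ^ (-(1 / 2) : ℝ) + v) := by
  have h1 := hK v hv
  have hs : 0 < √v := Real.sqrt_pos.2 hv
  have h2 : K / (√v + v) ≤ K * (v ^ (-(1 / 2) : ℝ) + v) := by
    rw [rpow_neg_half hv, div_eq_mul_inv]
    have : (√v + v)⁻¹ ≤ (√v)⁻¹ := by gcongr; linarith
    gcongr
    linarith
  have h3 := abs_log_le_half_add hv
  have h4 : |c| ≤ |c| * (v ^ (-(1 / 2) : ℝ) + v) := by
    have := one_le_half_add hv
    have := abs_nonneg c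
    nlinarith
  have h5 : |P.cdf v| ≤ |P.cdf v - (Real.log v + c)| + (|Real.log v| + |c|) := by
    have := abs_add_le (P.cdf v - (Real.log v + c)) (Real.log v + c)
    have := abs_add_le (Real.log v) c
    rw [sub_add_cancel] at *
    linarith
  linarith

lemma summable_primeZeta {s : ℝ} (hs : 0 < s) :
    Summable fun p : Nat.Primes => (p : ℝ) ^ (-(1 + s)) :=
  Nat.Primes.summable_rpow.2 (by linarith)

lemma P_w_mul_exp (s : ℝ) (p : Nat.Primes) :
    P.w p * Real.exp (-(s * P.l p)) = (p : ℝ) ^ (-(1 + s)) := by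
  have h0 : (0 : ℝ) < p := by exact_mod_cast p.2.pos
  rw [neg_add, Real.rpow_add h0, Real.rpow_neg_one, Real.rpow_def_of_pos h0]
  simp only [P]
  rw [one_div]
  congr 2
  ring

/-- The prime zeta function is `s` times the Laplace transform of the distribution function of
`P`. -/
lemma primeZeta_eq_integral {c K : ℝ} (hK0 : 0 ≤ K)
    (hK : ∀ v : ℝ, 0 < v → |P.cdf v - (Real.log v + c)| ≤ K / (√v + v)) {s : ℝ} (hs : 0 < s) :
    primeZeta s = s * ∫ v in Set.Ioi (0 : ℝ), P.cdf v * Real.exp (-(s * v)) := by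
  have hint : IntegrableOn (fun v => P.cdf v * Real.exp (-(s * v))) (Set.Ioi 0) :=
    integrableOn_mul_exp hs P.cdf_mono.measurable fun v hv => cdf_P_bound hK0 hK hv
  have t1 : Tendsto (fun h : ℝ => ∑ p ∈ P.trunc h, P.w p * Real.exp (-(s * P.l p))) atTop
      (𝓝 (primeZeta s)) := by
    simp_rw [P_w_mul_exp]
    exact (summable_primeZeta hs).hasSum.comp (tendsto_atTop_finset_of_monotone P.trunc_mono
      fun p => ⟨P.l p, by simp⟩)
  have e : ∀ h : ℝ, 0 ≤ h → ∑ p ∈ P.trunc h, P.w p * Real.exp (-(s * P.l p))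
      = Real.exp (-(s * h)) * P.cdf h + s * ∫ v in (0 : ℝ)..h, P.cdf v * Real.exp (-(s * v)) := by
    intro h hh
    rw [P.abel (a := 0) (fun p => (log_prime_pos p).le) hh
      (g := fun v => Real.exp (-(s * v))) (g' := fun v => -s * Real.exp (-(s * v)))
      (fun v _ => by
        have := ((hasDerivAt_id v).const_mul s).neg.exp
        refine this.congr_deriv ?_
        simp; ring)
      (Continuous.intervalIntegrable (by fun_prop) _ _), ← intervalIntegral.integral_const_mul,
      sub_eq_add_neg, ← intervalIntegral.integral_neg]
    congr 2
    ext v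
    ring
  have t2 : Tendsto (fun h : ℝ => Real.exp (-(s * h)) * P.cdf h) atTop (𝓝 0) := by
    have t3 : Tendsto (fun h : ℝ => (2 + |c| + K) * 2 * (h ^ (1 : ℝ) * Real.exp (-s * h))) atTop
        (𝓝 ((2 + |c| + K) * 2 * 0)) :=
      (tendsto_rpow_mul_exp_neg_mul_atTop_nhds_zero 1 s hs).const_mul _
    rw [mul_zero] at t3
    refine squeeze_zero' (Filter.Eventually.of_forall fun h =>
      mul_nonneg (Real.exp_pos _).le (P.cdf_nonneg h)) ?_ t3
    filter_upwards [eventually_ge_atTop 1] with h hh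
    have h1 := (le_abs_self _).trans (cdf_P_bound hK0 hK (v := h) (by linarith))
    have h2 : h ^ (-(1 / 2) : ℝ) ≤ h :=
      (Real.rpow_le_one_of_one_le_of_nonpos hh (by norm_num)).trans hh
    have h3 : P.cdf h ≤ (2 + |c| + K) * (2 * h) := by
      refine h1.trans ?_
      gcongr
      linarith
    rw [Real.rpow_one, neg_mul]
    calc _ ≤ Real.exp (-(s * h)) * ((2 + |c| + K) * (2 * h)) := by gcongr
      _ = _ := by ring
  have t4 := (intervalIntegral_tendsto_integral_Ioi 0 hint tendsto_id).const_mul s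
  have t5 := t2.add t4
  rw [zero_add] at t5
  refine tendsto_nhds_unique t1 (t5.congr' ?_)
  filter_upwards [eventually_ge_atTop 0] with h hh
  exact (e h hh).symm

/-- Abelian theorem: the Laplace transform of `log v + c` is `(c - γ - log s) / s`, and the error
`K / √v` only contributes `O(√s)` after multiplication by `s`. -/
lemma tendsto_primeZeta {c K : ℝ} (hK0 : 0 ≤ K)
    (hK : ∀ v : ℝ, 0 < v → |P.cdf v - (Real.log v + c)| ≤ K / (√v + v)) :
    Tendsto (fun s => primeZeta s + Real.log s) (𝓝[>] 0)
      (𝓝 (c - Real.eulerMascheroniConstant)) := by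
  rw [tendsto_iff_norm_sub_tendsto_zero]
  have tb : Tendsto (fun s : ℝ => K * Real.Gamma (1 / 2) * s ^ (1 / 2 : ℝ)) (𝓝[>] 0) (𝓝 0) := by
    have : Tendsto (fun s : ℝ => K * Real.Gamma (1 / 2) * s ^ (1 / 2 : ℝ)) (𝓝 0)
        (𝓝 (K * Real.Gamma (1 / 2) * 0 ^ (1 / 2 : ℝ))) :=
      (Real.continuousAt_rpow_const 0 (1 / 2) (by norm_num)).tendsto.const_mul _
    rw [Real.zero_rpow (by norm_num), mul_zero] at this
    exact this.mono_left nhdsWithin_le_nhds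
  refine squeeze_zero' (Filter.Eventually.of_forall fun _ => norm_nonneg _) ?_ tb
  filter_upwards [self_mem_nhdsWithin] with s hs
  have hs : 0 < s := hs
  have i1 : IntegrableOn (fun v => P.cdf v * Real.exp (-(s * v))) (Set.Ioi 0) :=
    integrableOn_mul_exp hs P.cdf_mono.measurable fun v hv => cdf_P_bound hK0 hK hv
  have i2 : IntegrableOn (fun v => Real.log v * Real.exp (-(s * v))) (Set.Ioi 0) :=
    integrableOn_mul_exp hs Real.measurable_log fun v hv => abs_log_le_half_add hv
  have i3 : IntegrableOn (fun v => c * Real.exp (-(s * v))) (Set.Ioi 0) :=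
    integrableOn_mul_exp (M := |c|) hs measurable_const fun v hv => by
      have := one_le_half_add hv
      have := abs_nonneg c
      nlinarith
  have i23 : IntegrableOn (fun v => Real.log v * Real.exp (-(s * v))
      + c * Real.exp (-(s * v))) (Set.Ioi 0) := i2.add i3
  have e1 : ∫ v in Set.Ioi (0 : ℝ), (P.cdf v - (Real.log v + c)) * Real.exp (-(s * v))
      = (∫ v in Set.Ioi (0 : ℝ), P.cdf v * Real.exp (-(s * v)))
        - ((∫ v in Set.Ioi (0 : ℝ), Real.log v * Real.exp (-(s * v)))
          + c * ∫ v in Set.Ioi (0 : ℝ), Real.exp (-(s * v))) := by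
    rw [← MeasureTheory.integral_const_mul, ← MeasureTheory.integral_add i2 i3,
      ← MeasureTheory.integral_sub i1 i23]
    congr 1
    ext v
    ring
  have e2 : primeZeta s + Real.log s - (c - Real.eulerMascheroniConstant)
      = s * ∫ v in Set.Ioi (0 : ℝ), (P.cdf v - (Real.log v + c)) * Real.exp (-(s * v)) := by
    rw [e1, mul_sub, ← primeZeta_eq_integral hK0 hK hs, mul_add, integral_log_mul_exp_scaled hs,
      mul_left_comm, integral_exp_Ioi hs]
    ring
  rw [e2, norm_mul, Real.norm_of_nonneg hs.le]
  have i4 : IntegrableOn (fun v : ℝ => K * (v ^ ((1 / 2 : ℝ) - 1) * Real.exp (-(s * v))))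
      (Set.Ioi 0) := by
    have := integrableOn_rpow_mul_exp_neg_mul_rpow (p := 1) (s := 1 / 2 - 1) (b := s)
      (by norm_num) one_pos hs
    simp only [Real.rpow_one, neg_mul] at this
    exact this.const_mul K
  have h1 : ‖∫ v in Set.Ioi (0 : ℝ), (P.cdf v - (Real.log v + c)) * Real.exp (-(s * v))‖
      ≤ ∫ v in Set.Ioi (0 : ℝ), K * (v ^ ((1 / 2 : ℝ) - 1) * Real.exp (-(s * v))) := by
    refine norm_integral_le_of_norm_le i4 ?_
    refine (ae_restrict_iff' measurableSet_Ioi).2 (Filter.Eventually.of_forall fun v hv => ?_)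
    have hv : 0 < v := hv
    have h1 := hK v hv
    have hsq : 0 < √v := Real.sqrt_pos.2 hv
    rw [norm_mul, Real.norm_eq_abs, Real.norm_of_nonneg (Real.exp_pos _).le, ← mul_assoc,
      show (1 / 2 : ℝ) - 1 = -(1 / 2) by norm_num, rpow_neg_half hv]
    have : (√v + v)⁻¹ ≤ (√v)⁻¹ := by gcongr; linarith
    have h2 : K / (√v + v) ≤ K * (√v)⁻¹ := by rw [div_eq_mul_inv]; gcongr
    have := h1.trans h2
    gcongr
  rw [MeasureTheory.integral_const_mul,
    Real.integral_rpow_mul_exp_neg_mul_Ioi (by norm_num) hs] at h1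
  calc _ ≤ s * (K * ((1 / s) ^ (1 / 2 : ℝ) * Real.Gamma (1 / 2))) := by gcongr
    _ = K * Real.Gamma (1 / 2) * (s * (1 / s) ^ (1 / 2 : ℝ)) := by ring
    _ = _ := by
      congr 1
      rw [one_div, Real.inv_rpow hs.le, ← Real.rpow_neg hs.le]
      nth_rewrite 1 [← Real.rpow_one s]
      rw [← Real.rpow_add hs]
      norm_num

/-- The higher prime-power part `-log (1 - x) - x` of an Euler factor. -/
noncomputable def hpart (x : ℝ) : ℝ := -Real.log (1 - x) - x

lemma hpart_bound {x : ℝ} (h0 : 0 ≤ x) (h1 : x ≤ 1 / 2) : |hpart x| ≤ x ^ 2 := by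
  have h2 : x ≤ -Real.log (1 - x) := by
    have := Real.log_le_sub_one_of_pos (x := 1 - x) (by linarith)
    linarith
  have h3 : -Real.log (1 - x) ≤ x + x ^ 2 := by
    have h6 : Real.exp (-(x + x ^ 2)) ≤ 1 - x := by
      have h8 : 1 + (x + x ^ 2) + (x + x ^ 2) ^ 2 / 2 ≤ Real.exp (x + x ^ 2) :=
        Real.quadratic_le_exp_of_nonneg (by positivity)
      rw [Real.exp_neg, inv_le_comm₀ (Real.exp_pos _) (by linarith)]
      refine le_trans ?_ h8
      rw [inv_le_iff_one_le_mul₀ (by linarith)]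
      have h7 : 0 ≤ x ^ 2 * (1 - x - x ^ 2 - x ^ 3) := by
        have e2 : x ^ 2 ≤ (1 / 2) ^ 2 := by gcongr
        have e3 : x ^ 3 ≤ (1 / 2) ^ 3 := by gcongr
        exact mul_nonneg (sq_nonneg x) (by linarith)
      linarith [h7]
    have h9 := (Real.le_log_iff_exp_le (by linarith : (0 : ℝ) < 1 - x)).2 h6
    linarith
  rw [hpart, abs_of_nonneg (by linarith)]
  linarith

lemma prime_rpow_bounds {s : ℝ} (hs : 0 ≤ s) (p : Nat.Primes) :
    0 ≤ (p : ℝ) ^ (-(1 + s)) ∧ (p : ℝ) ^ (-(1 + s)) ≤ 1 / p ∧ (p : ℝ) ^ (-(1 + s)) ≤ 1 / 2 := by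
  have h2 : (2 : ℝ) ≤ p := by exact_mod_cast p.2.two_le
  have h3 : (p : ℝ) ^ (-(1 + s)) ≤ 1 / p := by
    rw [one_div, ← Real.rpow_neg_one]
    exact Real.rpow_le_rpow_of_exponent_le (by linarith) (by linarith)
  exact ⟨by positivity, h3, h3.trans (one_div_le_one_div_of_le (by norm_num) h2)⟩

lemma hpart_prime_bound {s : ℝ} (hs : 0 ≤ s) (p : Nat.Primes) :
    |hpart ((p : ℝ) ^ (-(1 + s)))| ≤ (p : ℝ) ^ (-2 : ℝ) := by
  obtain ⟨h1, h2, h3⟩ := prime_rpow_bounds hs p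
  refine (hpart_bound h1 h3).trans ?_
  have h4 : (p : ℝ) ^ (-2 : ℝ) = (1 / p) ^ 2 := by
    rw [Real.rpow_neg (by positivity), one_div, inv_pow]; norm_cast
  rw [h4]
  gcongr

lemma summable_prime_sq : Summable fun p : Nat.Primes => (p : ℝ) ^ (-2 : ℝ) :=
  Nat.Primes.summable_rpow.2 (by norm_num)

lemma tendsto_tsum_hpart :
    Tendsto (fun s : ℝ => ∑' p : Nat.Primes, hpart ((p : ℝ) ^ (-(1 + s)))) (𝓝[>] 0)
      (𝓝 (∑' p : Nat.Primes, hpart (1 / (p : ℝ)))) := by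
  refine tendsto_tsum_of_dominated_convergence summable_prime_sq (fun p => ?_) ?_
  · have h2 : (2 : ℝ) ≤ p := by exact_mod_cast p.2.two_le
    have t1 : Tendsto (fun s : ℝ => (p : ℝ) ^ (-(1 + s))) (𝓝[>] 0) (𝓝 (1 / (p : ℝ))) := by
      have hc : Continuous fun s : ℝ => (p : ℝ) ^ (-(1 + s)) :=
        Continuous.rpow continuous_const (by fun_prop) fun _ => Or.inl (by positivity)
      have := hc.tendsto 0
      rw [add_zero, Real.rpow_neg_one, ← one_div] at this
      exact this.mono_left nhdsWithin_le_nhds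
    have h3 : (1 : ℝ) / p ≤ 1 / 2 := one_div_le_one_div_of_le (by norm_num) h2
    exact ((t1.const_sub 1).log (by linarith)).neg.sub t1
  · filter_upwards [self_mem_nhdsWithin] with s hs p
    exact hpart_prime_bound (le_of_lt hs) p

/-- The Euler product of `ζ(1 + s)`, written as an exponential of sums over primes. -/
lemma exp_primeZeta_add {s : ℝ} (hs : 0 < s) :
    Real.exp (primeZeta s + ∑' p : Nat.Primes, hpart ((p : ℝ) ^ (-(1 + s))))
      = ∑' n : ℕ, 1 / (n : ℝ) ^ (1 + s) := by
  have s1 := summable_primeZeta hs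
  have s2 : Summable fun p : Nat.Primes => hpart ((p : ℝ) ^ (-(1 + s))) :=
    Summable.of_norm_bounded summable_prime_sq fun p => hpart_prime_bound hs.le p
  have h1 := (s1.hasSum.add s2.hasSum).rexp
  let f : ℕ →*₀ ℝ :=
    { toFun := fun n => (n : ℝ) ^ (-(1 + s))
      map_zero' := by
        simp only [Nat.cast_zero]
        exact Real.zero_rpow (by linarith)
      map_one' := by simp
      map_mul' := fun m n => by
        simp only [Nat.cast_mul]
        exact Real.mul_rpow (Nat.cast_nonneg _) (Nat.cast_nonneg _) }
  have hf : ∀ n, f n = 1 / (n : ℝ) ^ (1 + s) := fun n => by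
    change (n : ℝ) ^ (-(1 + s)) = _
    rw [Real.rpow_neg (Nat.cast_nonneg _), one_div]
  have hsum : Summable fun n : ℕ => ‖f n‖ := by
    simp_rw [hf]
    exact (Real.summable_one_div_nat_rpow.2 (by linarith)).norm
  have h2 := EulerProduct.eulerProduct_completely_multiplicative_hasProd hsum
  simp_rw [hf] at h2
  refine HasProd.unique ?_ h2
  convert! h1 using 2 with p
  obtain ⟨h3, _, h4⟩ := prime_rpow_bounds hs.le p
  rw [Function.comp_apply, hpart, add_sub_cancel, Real.exp_neg, Real.exp_log (by linarith),
    Real.rpow_neg (Nat.cast_nonneg _), one_div]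

/-- The constant in Mertens' theorem is `c₁`: compare `tendsto_primeZeta` with `s ζ(1 + s) → 1` via
the Euler product. -/
lemma mertens_const_eq {c K : ℝ} (hK0 : 0 ≤ K)
    (hK : ∀ v : ℝ, 0 < v → |P.cdf v - (Real.log v + c)| ≤ K / (√v + v)) : c = mertensC1 := by
  have t1 := (tendsto_primeZeta hK0 hK).add tendsto_tsum_hpart
  have t2 : Tendsto (fun s : ℝ => s * ∑' n : ℕ, 1 / (n : ℝ) ^ (1 + s)) (𝓝[>] 0) (𝓝 1) := by
    have h : Tendsto (fun s : ℝ => 1 + s) (𝓝[>] 0) (𝓝[>] 1) := by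
      refine tendsto_nhdsWithin_iff.2 ⟨?_, ?_⟩
      · have : Tendsto (fun s : ℝ => 1 + s) (𝓝 0) (𝓝 (1 + 0)) :=
          (continuous_const.add continuous_id).tendsto 0
        rw [add_zero] at this
        exact this.mono_left nhdsWithin_le_nhds
      · filter_upwards [self_mem_nhdsWithin] with s hs
        have hs : 0 < s := hs
        exact Set.mem_Ioi.2 (by linarith)
    have := tendsto_sub_mul_tsum_nat_rpow.comp h
    refine this.congr fun s => ?_
    simp
  have t3 := t2.log one_ne_zero
  rw [Real.log_one] at t3
  have t4 : Tendsto (fun s : ℝ => Real.log (s * ∑' n : ℕ, 1 / (n : ℝ) ^ (1 + s))) (𝓝[>] 0)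
      (𝓝 (c - Real.eulerMascheroniConstant + ∑' p : Nat.Primes, hpart (1 / (p : ℝ)))) := by
    refine t1.congr' ?_
    filter_upwards [self_mem_nhdsWithin] with s hs
    have hs : 0 < s := hs
    rw [← exp_primeZeta_add hs, Real.log_mul hs.ne' (Real.exp_pos _).ne', Real.log_exp]
    ring
  have h := tendsto_nhds_unique t3 t4
  have e : ∑' p : Nat.Primes, (Real.log (1 / (1 - 1 / (p : ℝ))) - 1 / (p : ℝ))
      = ∑' p : Nat.Primes, hpart (1 / (p : ℝ)) := by
    refine tsum_congr fun p => ?_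
    rw [hpart, one_div (1 - _), Real.log_inv]
  rw [mertensC1, e]
  linarith

/-- Mertens' second theorem in the variable `v = log x`. -/
lemma mertens_P : ∃ K : ℝ, 0 ≤ K ∧ ∀ v : ℝ, 0 < v →
    |P.cdf v - (Real.log v + mertensC1)| ≤ K / (√v + v) := by
  obtain ⟨c, K, hK0, hK⟩ := mertens_second'
  obtain rfl := mertens_const_eq hK0 hK
  exact ⟨K, hK0, hK⟩

/-! ### The distribution function of a convolution -/

section Convolution

/-- The logarithmic scale `1 + log (1 + u)`; unlike `log u` it is at least `1` on `[0, ∞)`. -/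
noncomputable def ell (u : ℝ) : ℝ := 1 + Real.log (1 + u)

lemma one_le_ell {u : ℝ} (h : 0 ≤ u) : 1 ≤ ell u := by
  have := Real.log_nonneg (show 1 ≤ 1 + u by linarith)
  unfold ell; linarith

lemma ell_mono {u v : ℝ} (h : 0 ≤ u) (huv : u ≤ v) : ell u ≤ ell v := by
  unfold ell
  gcongr

/-- `A.cdf` is approximated by the smooth function `a` with derivative `a'`, where `a` has size
`ell ^ (i + 1)` and the error is `ell v ^ i / v` at infinity and `v ^ (-1/2)` at the origin. -/
structure Approx {ι : Type} (A : WFam ι) (a a' : ℝ → ℝ) (i : ℕ) (C : ℝ) : Prop where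
  C_nonneg : 0 ≤ C
  err : ∀ v, 0 < v → |A.cdf v - a v| ≤ C * ell v ^ i / (√v + v)
  bound : ∀ v, 1 / 2 ≤ v → |a v| ≤ C * ell v ^ (i + 1)
  deriv : ∀ v, 1 / 2 ≤ v → HasDerivAt a (a' v) v
  deriv_bound : ∀ v, 1 / 2 ≤ v → |a' v| ≤ C * ell v ^ i / v
  deriv_cont : ContinuousOn a' (Set.Ici (1 / 2))
  int : ∀ h, 0 < h → IntervalIntegrable a volume 0 h

lemma hasDerivAt_log_one_add_sqrt {v : ℝ} (h : 0 < v) :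
    HasDerivAt (fun v => 2 * Real.log (1 + √v)) (1 / (√v + v)) v := by
  have hs : 0 < √v := Real.sqrt_pos.2 h
  have := (((Real.hasDerivAt_sqrt h.ne').const_add 1).log (by positivity)).const_mul 2
  refine this.congr_deriv ?_
  have h2 : √v + v = √v * (1 + √v) := by nlinarith [Real.mul_self_sqrt h.le]
  rw [h2]
  have : 1 + √v ≠ 0 := by positivity
  field_simp

/-- The weight `1 / (√v + v)` has mass `O(log h)` on `[0, h]`; this is where the additional
logarithm in the error term of a convolution comes from. -/
lemma integral_inv_sqrt_add {h : ℝ} (hh : 0 ≤ h) :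
    IntervalIntegrable (fun v => 1 / (√v + v)) volume 0 h ∧
    ∫ v in (0 : ℝ)..h, 1 / (√v + v) = 2 * Real.log (1 + √h) := by
  have hc : ContinuousOn (fun v => 2 * Real.log (1 + √v)) (Set.Icc 0 h) := by
    refine ContinuousOn.mul continuousOn_const (ContinuousOn.log (by fun_prop) fun v _ => ?_)
    positivity
  have i1 : IntervalIntegrable (fun v => 1 / (√v + v)) volume 0 h := by
    rw [intervalIntegrable_iff_integrableOn_Ioc_of_le hh]
    refine intervalIntegral.integrableOn_deriv_of_nonneg hc
      (fun v hv => hasDerivAt_log_one_add_sqrt hv.1) fun v hv => ?_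
    have := hv.1
    positivity
  refine ⟨i1, ?_⟩
  rw [intervalIntegral.integral_eq_sub_of_hasDerivAt_of_le hh hc
    (fun v hv => hasDerivAt_log_one_add_sqrt hv.1) i1]
  simp

variable {ι κ : Type} {A : WFam ι} {B : WFam κ} {a a' b b' : ℝ → ℝ} {i j : ℕ} {Ca Cb : ℝ}

/-- Crude upper bound for the distribution function at the midpoint. -/
lemma Approx.cdf_le (HA : Approx A a a' i Ca) {u : ℝ} (hu : 1 ≤ u) :
    A.cdf (u / 2) ≤ 3 * Ca * ell u ^ (i + 1) := by
  have h1 := HA.err (u / 2) (by linarith)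
  have h2 := HA.bound (u / 2) (by linarith)
  have hC := HA.C_nonneg
  have hl : 1 ≤ ell (u / 2) := one_le_ell (by linarith)
  have hl2 : ell (u / 2) ≤ ell u := ell_mono (by linarith) (by linarith)
  have h3 : Ca * ell (u / 2) ^ i / (√(u / 2) + u / 2) ≤ 2 * (Ca * ell u ^ (i + 1)) := by
    have hs := Real.sqrt_nonneg (u / 2)
    rw [div_le_iff₀ (by linarith)]
    have h4 : ell (u / 2) ^ i ≤ ell u ^ (i + 1) :=
      (pow_le_pow_left₀ (by linarith) hl2 i).trans (pow_le_pow_right₀ (by linarith) (by lia))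
    have h5 : Ca * ell (u / 2) ^ i ≤ Ca * ell u ^ (i + 1) := by gcongr
    have h6 : 0 ≤ Ca * ell u ^ (i + 1) := mul_nonneg hC (pow_nonneg (by linarith) _)
    nlinarith
  have h4 : Ca * ell (u / 2) ^ (i + 1) ≤ Ca * ell u ^ (i + 1) :=
    mul_le_mul_of_nonneg_left (pow_le_pow_left₀ (by linarith) hl2 _) hC
  have := (abs_le.1 h1).2
  have := (abs_le.1 h2).2
  linarith

/-- One of the two sums in the hyperbola formula: `B.cdf` is replaced by `b`, the sum is turned
into an integral by partial summation, and there `A.cdf` is replaced by `a`. -/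
lemma Approx.half_sum (HA : Approx A a a' i Ca) (HB : Approx B b b' j Cb) {u : ℝ} (hu : 1 ≤ u) :
    |∑ k ∈ A.trunc (u / 2), A.w k * B.cdf (u - A.l k)
      - (b (u / 2) * A.cdf (u / 2) + ∫ v in (0 : ℝ)..(u / 2), a v * b' (u - v))|
      ≤ 10 * Ca * Cb * (ell u ^ (i + j + 1) / u) := by
  have hCa := HA.C_nonneg
  have hCb := HB.C_nonneg
  have hl : 1 ≤ ell u := one_le_ell (by linarith)
  have h1 : |∑ k ∈ A.trunc (u / 2), A.w k * B.cdf (u - A.l k)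
      - ∑ k ∈ A.trunc (u / 2), A.w k * b (u - A.l k)| ≤ 6 * Ca * Cb * (ell u ^ (i + j + 1) / u) := by
    rw [← Finset.sum_sub_distrib]
    calc _ ≤ ∑ k ∈ A.trunc (u / 2), A.w k * (2 * Cb * ell u ^ j / u) := by
          refine (Finset.abs_sum_le_sum_abs _ _).trans (Finset.sum_le_sum fun k hk => ?_)
          have hk' : A.l k ≤ u / 2 := (A.mem_trunc).1 hk
          have hk0 := A.l_pos k
          have hs := Real.sqrt_nonneg (u - A.l k)
          rw [← mul_sub, abs_mul, abs_of_nonneg (A.w_nonneg k)]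
          refine mul_le_mul_of_nonneg_left ((HB.err _ (by linarith)).trans ?_) (A.w_nonneg k)
          have e1 : 1 ≤ ell (u - A.l k) := one_le_ell (by linarith)
          have e2 : ell (u - A.l k) ≤ ell u := ell_mono (by linarith) (by linarith)
          calc _ ≤ Cb * ell u ^ j / (u / 2) := by gcongr; linarith
            _ = _ := by field_simp
      _ = A.cdf (u / 2) * (2 * Cb * ell u ^ j / u) := by rw [← Finset.sum_mul]; rfl
      _ ≤ 3 * Ca * ell u ^ (i + 1) * (2 * Cb * ell u ^ j / u) := by
          gcongr
          exact HA.cdf_le hu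
      _ = _ := by ring
  have hcont : ContinuousOn (fun v => b' (u - v)) (Set.Icc 0 (u / 2)) := by
    refine HB.deriv_cont.comp (by fun_prop) fun v hv => ?_
    have := hv.2
    simp only [Set.mem_Ici]; linarith
  have hcont' : ContinuousOn (fun v => b' (u - v)) (Set.uIcc 0 (u / 2)) := by
    rwa [Set.uIcc_of_le (by linarith)]
  have h2 : ∑ k ∈ A.trunc (u / 2), A.w k * b (u - A.l k)
      = b (u / 2) * A.cdf (u / 2) + ∫ v in (0 : ℝ)..(u / 2), A.cdf v * b' (u - v) := by
    have := A.abel (a := 0) (h := u / 2) (fun k => (A.l_pos k).le) (by linarith)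
      (g := fun v => b (u - v)) (g' := fun v => - b' (u - v)) (fun v hv => by
        have h := HB.deriv (u - v) (by linarith [hv.2])
        exact h.comp_const_sub u v) hcont'.neg.intervalIntegrable
    rw [this, show u - u / 2 = u / 2 by ring]
    simp
  have iA : IntervalIntegrable (fun v => A.cdf v * b' (u - v)) volume 0 (u / 2) :=
    (A.cdf_intervalIntegrable _ _).mul_continuousOn hcont'
  have ia : IntervalIntegrable (fun v => a v * b' (u - v)) volume 0 (u / 2) :=
    (HA.int _ (by linarith)).mul_continuousOn hcont'
  have h3 : |(∫ v in (0 : ℝ)..(u / 2), A.cdf v * b' (u - v))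
      - ∫ v in (0 : ℝ)..(u / 2), a v * b' (u - v)| ≤ 4 * Ca * Cb * (ell u ^ (i + j + 1) / u) := by
    rw [← intervalIntegral.integral_sub iA ia]
    obtain ⟨i1, e1⟩ := integral_inv_sqrt_add (show 0 ≤ u / 2 by linarith)
    have := intervalIntegral.norm_integral_le_of_norm_le (μ := volume)
      (f := fun v => A.cdf v * b' (u - v) - a v * b' (u - v))
      (g := fun v => (2 * Ca * Cb * ell u ^ (i + j) / u) * (1 / (√v + v)))
      (show 0 ≤ u / 2 by linarith) (Filter.Eventually.of_forall fun v hv => by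
        have hv0 : 0 < v := hv.1
        have hv1 : v ≤ u / 2 := hv.2
        have hs := Real.sqrt_nonneg v
        rw [← sub_mul, norm_mul]
        have t1 := HA.err v hv0
        have t2 := HB.deriv_bound (u - v) (by linarith)
        have l1 : 1 ≤ ell v := one_le_ell (by linarith)
        have l2 : ell v ≤ ell u := ell_mono (by linarith) (by linarith)
        have l3 : 1 ≤ ell (u - v) := one_le_ell (by linarith)
        have l4 : ell (u - v) ≤ ell u := ell_mono (by linarith) (by linarith)
        calc _ ≤ (Ca * ell v ^ i / (√v + v)) * (Cb * ell (u - v) ^ j / (u - v)) :=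
              mul_le_mul t1 t2 (abs_nonneg _) (by positivity)
          _ ≤ (Ca * ell u ^ i / (√v + v)) * (Cb * ell u ^ j / (u / 2)) := by
              have : 0 < u - v := by linarith
              gcongr
              linarith
          _ = _ := by field_simp; ring) (i1.const_mul _)
    refine this.trans ?_
    rw [intervalIntegral.integral_const_mul, e1]
    have hlog : Real.log (1 + √(u / 2)) ≤ ell u := by
      have : √(u / 2) ≤ u := by
        rw [Real.sqrt_le_left (by linarith)]; nlinarith
      have : Real.log (1 + √(u / 2)) ≤ Real.log (1 + u) := by gcongr
      unfold ell; linarith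
    calc _ ≤ (2 * Ca * Cb * ell u ^ (i + j) / u) * (2 * ell u) := by gcongr
      _ = _ := by ring
  rw [h2] at h1
  have := (abs_add_le _ _).trans (add_le_add h1 h3)
  refine le_trans (le_of_eq ?_) (this.trans (le_of_eq (by ring)))
  congr 1
  ring

/-- The main term of the distribution function of a convolution, where `a'` and `b'` stand for the
derivatives of `a` and `b`. -/
noncomputable def convMain (a a' b b' : ℝ → ℝ) (u : ℝ) : ℝ :=
  a (u / 2) * b (u / 2) + (∫ v in (0 : ℝ)..(u / 2), a v * b' (u - v))
    + ∫ v in (0 : ℝ)..(u / 2), b v * a' (u - v)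

/-- The hyperbola formula at `h = u / 2`: apart from the two sums handled by `half_sum`, the terms
`b A + a B - A B` differ from `a b` by the product `-(A - a) (B - b)` of the two errors. -/
lemma Approx.conv_err (HA : Approx A a a' i Ca) (HB : Approx B b b' j Cb) {u : ℝ} (hu : 1 ≤ u) :
    |(A.conv B).cdf u - convMain a a' b b' u| ≤ 24 * Ca * Cb * (ell u ^ (i + j + 1) / u) := by
  have h1 := HA.half_sum HB hu
  have h2 := HB.half_sum HA hu
  have hCa := HA.C_nonneg
  have hCb := HB.C_nonneg
  have hy := A.hyperbola B (u / 2)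
  rw [show 2 * (u / 2) = u by ring] at hy
  have hu2 : 0 < u / 2 := by linarith
  have hs := Real.sqrt_nonneg (u / 2)
  have l1 : 1 ≤ ell (u / 2) := one_le_ell (by linarith)
  have l2 : ell (u / 2) ≤ ell u := ell_mono (by linarith) (by linarith)
  have hl : 1 ≤ ell u := one_le_ell (by linarith)
  have h3 : |(A.cdf (u / 2) - a (u / 2)) * (B.cdf (u / 2) - b (u / 2))|
      ≤ 4 * Ca * Cb * (ell u ^ (i + j + 1) / u) := by
    rw [abs_mul]
    calc _ ≤ (Ca * ell (u / 2) ^ i / (√(u / 2) + u / 2))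
          * (Cb * ell (u / 2) ^ j / (√(u / 2) + u / 2)) :=
          mul_le_mul (HA.err _ hu2) (HB.err _ hu2) (abs_nonneg _) (by positivity)
      _ ≤ (Ca * ell u ^ i / (1 / 2)) * (Cb * ell u ^ j / (u / 2)) := by
          gcongr <;> linarith
      _ = 4 * Ca * Cb * (ell u ^ (i + j) / u) := by field_simp; ring
      _ ≤ _ := by
          have : ell u ^ (i + j) ≤ ell u ^ (i + j + 1) := pow_le_pow_right₀ hl (by lia)
          gcongr
  have := (abs_sub _ _).trans (add_le_add ((abs_add_le _ _).trans (add_le_add h1 h2)) h3)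
  rw [hy]
  refine le_trans (le_of_eq ?_) (this.trans (le_of_eq (by ring)))
  congr 1
  unfold convMain
  ring

end Convolution

/-! ### Logarithmic integrals over `(0, 1)` -/

lemma continuousOn_mul_log_sq : ContinuousOn (fun x : ℝ => x * Real.log x ^ 2) (Set.Icc 0 1) := by
  have hc : Continuous fun x : ℝ => 4 * (√x * Real.log √x) ^ 2 := by
    have := Real.continuous_mul_log.comp Real.continuous_sqrt
    exact (this.pow 2).const_mul 4
  refine hc.continuousOn.congr fun x hx => ?_
  simp only
  rw [Real.log_sqrt hx.1, mul_pow, Real.sq_sqrt hx.1]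
  ring

lemma integral_pow_mul_log (n : ℕ) :
    IntervalIntegrable (fun w : ℝ => w ^ n * Real.log w) volume 0 1 ∧
    ∫ w in (0 : ℝ)..1, w ^ n * Real.log w = -(1 / ((n : ℝ) + 1) ^ 2) := by
  have hn : (n : ℝ) + 1 ≠ 0 := by positivity
  have hc : Continuous fun w : ℝ => w ^ n * (w * Real.log w) / (n + 1)
      - w ^ (n + 1) / ((n : ℝ) + 1) ^ 2 := by
    have := Real.continuous_mul_log
    fun_prop
  have hd : ∀ w ∈ Set.Ioo (0 : ℝ) 1, HasDerivAt (fun w : ℝ => w ^ n * (w * Real.log w) / (n + 1)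
      - w ^ (n + 1) / ((n : ℝ) + 1) ^ 2) (w ^ n * Real.log w) w := by
    intro w hw
    have hw0 : w ≠ 0 := hw.1.ne'
    have h1 : HasDerivAt (fun w : ℝ => w ^ (n + 1) * Real.log w)
        (((n + 1 : ℕ) : ℝ) * w ^ n * Real.log w + w ^ (n + 1) * w⁻¹) w :=
      (hasDerivAt_pow (n + 1) w).mul (Real.hasDerivAt_log hw0)
    have h2 := (h1.div_const ((n : ℝ) + 1)).sub
      ((hasDerivAt_pow (n + 1) w).div_const (((n : ℝ) + 1) ^ 2))
    refine (h2.congr_deriv ?_).congr_of_eventuallyEq (Filter.Eventually.of_forall fun w => ?_)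
    · push_cast
      field_simp
      ring
    · change _ = w ^ (n + 1) * Real.log w / ((n : ℝ) + 1) - w ^ (n + 1) / ((n : ℝ) + 1) ^ 2
      ring
  have hi : IntervalIntegrable (fun w : ℝ => w ^ n * Real.log w) volume 0 1 := by
    have := intervalIntegral.integrableOn_deriv_of_nonneg (a := 0) (b := 1)
      hc.neg.continuousOn (fun w hw => (hd w hw).neg) fun w hw =>
        neg_nonneg.2 (mul_nonpos_of_nonneg_of_nonpos (pow_nonneg hw.1.le _)
          (Real.log_nonpos hw.1.le hw.2.le))
    rw [intervalIntegrable_iff_integrableOn_Ioc_of_le zero_le_one]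
    simpa using this.neg
  refine ⟨hi, ?_⟩
  rw [intervalIntegral.integral_eq_sub_of_hasDerivAt_of_le zero_le_one hc.continuousOn hd hi]
  simp

lemma integral_pow_mul_log_sq (n : ℕ) :
    IntervalIntegrable (fun w : ℝ => w ^ n * Real.log w ^ 2) volume 0 1 ∧
    ∫ w in (0 : ℝ)..1, w ^ n * Real.log w ^ 2 = 2 / ((n : ℝ) + 1) ^ 3 := by
  have hn : (n : ℝ) + 1 ≠ 0 := by positivity
  obtain ⟨i1, e1⟩ := integral_pow_mul_log n
  have hc : ContinuousOn (fun w : ℝ => w ^ n * (w * Real.log w ^ 2) / (n + 1)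
      - 2 * (w ^ n * (w * Real.log w)) / (n + 1) ^ 2
      + 2 * w ^ (n + 1) / ((n : ℝ) + 1) ^ 3) (Set.Icc 0 1) := by
    have := Real.continuous_mul_log.continuousOn (s := Set.Icc 0 1)
    have := continuousOn_mul_log_sq
    fun_prop
  have hd : ∀ w ∈ Set.Ioo (0 : ℝ) 1, HasDerivAt (fun w : ℝ =>
      w ^ n * (w * Real.log w ^ 2) / (n + 1)
      - 2 * (w ^ n * (w * Real.log w)) / (n + 1) ^ 2
      + 2 * w ^ (n + 1) / ((n : ℝ) + 1) ^ 3) (w ^ n * Real.log w ^ 2) w := by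
    intro w hw
    have hw0 : w ≠ 0 := hw.1.ne'
    have h1 : HasDerivAt (fun w : ℝ => w ^ (n + 1) * Real.log w)
        (((n + 1 : ℕ) : ℝ) * w ^ n * Real.log w + w ^ (n + 1) * w⁻¹) w :=
      (hasDerivAt_pow (n + 1) w).mul (Real.hasDerivAt_log hw0)
    have h0 : HasDerivAt (fun w : ℝ => w ^ (n + 1) * Real.log w ^ 2)
        (((n + 1 : ℕ) : ℝ) * w ^ n * Real.log w ^ 2 + w ^ (n + 1) * (2 * Real.log w * w⁻¹)) w := by
      have := (hasDerivAt_pow (n + 1) w).mul ((Real.hasDerivAt_log hw0).pow 2)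
      refine this.congr_deriv ?_
      simp
    have h2 := ((h0.div_const ((n : ℝ) + 1)).sub
      ((h1.const_mul 2).div_const (((n : ℝ) + 1) ^ 2))).add
      (((hasDerivAt_pow (n + 1) w).const_mul 2).div_const (((n : ℝ) + 1) ^ 3))
    refine (h2.congr_deriv ?_).congr_of_eventuallyEq (Filter.Eventually.of_forall fun w => ?_)
    · push_cast
      field_simp
      ring
    · change _ = w ^ (n + 1) * Real.log w ^ 2 / ((n : ℝ) + 1)
        - 2 * (w ^ (n + 1) * Real.log w) / ((n : ℝ) + 1) ^ 2
        + 2 * w ^ (n + 1) / ((n : ℝ) + 1) ^ 3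
      ring
  have hi : IntervalIntegrable (fun w : ℝ => w ^ n * Real.log w ^ 2) volume 0 1 := by
    have := intervalIntegral.integrableOn_deriv_of_nonneg (a := 0) (b := 1)
      hc hd fun w hw => mul_nonneg (pow_nonneg hw.1.le _) (sq_nonneg _)
    rwa [intervalIntegrable_iff_integrableOn_Ioc_of_le zero_le_one]
  refine ⟨hi, ?_⟩
  rw [intervalIntegral.integral_eq_sub_of_hasDerivAt_of_le zero_le_one hc hd hi]
  simp

/-- Expanding `1 / (1 - w)` as a geometric series and integrating term by term. -/
lemma integral_div_one_sub {f : ℝ → ℝ} {m : ℕ → ℝ} {S : ℝ}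
    (hi : ∀ n : ℕ, IntervalIntegrable (fun w => w ^ n * f w) volume 0 1)
    (hm : ∀ n : ℕ, ∫ w in (0 : ℝ)..1, w ^ n * f w = m n)
    (hf : ∀ w ∈ Set.Ioc (0 : ℝ) 1, 0 ≤ f w) (hS : HasSum m S) :
    ∫ w in (0 : ℝ)..1, f w / (1 - w) = S := by
  have hi' : ∀ n : ℕ, Integrable (fun w => w ^ n * f w) (volume.restrict (Set.Ioc (0 : ℝ) 1)) :=
    fun n => (intervalIntegrable_iff_integrableOn_Ioc_of_le zero_le_one).1 (hi n)
  have hm' : ∀ n : ℕ, ∫ w in Set.Ioc (0 : ℝ) 1, w ^ n * f w = m n := fun n => by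
    rw [← intervalIntegral.integral_of_le zero_le_one, hm]
  have hn : ∀ n : ℕ, ∫ w in Set.Ioc (0 : ℝ) 1, ‖w ^ n * f w‖ = m n := fun n => by
    rw [← hm' n]
    refine setIntegral_congr_fun measurableSet_Ioc fun w hw => ?_
    exact Real.norm_of_nonneg (mul_nonneg (pow_nonneg hw.1.le _) (hf w hw))
  have h := hasSum_integral_of_summable_integral_norm hi' (by simpa only [hn] using hS.summable)
  simp only [hm'] at h
  rw [hS.unique h, intervalIntegral.integral_of_le zero_le_one,
    MeasureTheory.integral_Ioc_eq_integral_Ioo, MeasureTheory.integral_Ioc_eq_integral_Ioo]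
  refine setIntegral_congr_fun measurableSet_Ioo fun w hw => ?_
  rw [tsum_mul_right, tsum_geometric_of_lt_one hw.1.le hw.2]
  ring

lemma integral_log_div : ∫ w in (0 : ℝ)..1, Real.log w / (1 - w) = -(π ^ 2 / 6) := by
  have hs : HasSum (fun n : ℕ => 1 / ((n : ℝ) + 1) ^ 2) (π ^ 2 / 6) := by
    have := (hasSum_nat_add_iff' 1).2 hasSum_zeta_two
    simpa using this
  have := integral_div_one_sub (f := fun w => - Real.log w)
    (fun n => by simp only [mul_neg]; exact (integral_pow_mul_log n).1.neg)
    (fun n => by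
      simp only [mul_neg, intervalIntegral.integral_neg, (integral_pow_mul_log n).2, neg_neg])
    (fun w hw => neg_nonneg.2 (Real.log_nonpos hw.1.le hw.2)) hs
  simp only [neg_div, intervalIntegral.integral_neg] at this
  linarith

lemma integral_log_sq_div :
    ∫ w in (0 : ℝ)..1, Real.log w ^ 2 / (1 - w) = 2 * (riemannZeta 3).re := by
  have hs : HasSum (fun n : ℕ => 2 / ((n : ℝ) + 1) ^ 3) (2 * (riemannZeta 3).re) := by
    have h1 : Summable fun n : ℕ => 1 / (n : ℝ) ^ 3 := Real.summable_one_div_nat_pow.2 (by norm_num)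
    have h2 : (riemannZeta 3).re = ∑' n : ℕ, 1 / (n : ℝ) ^ 3 := by
      have := zeta_nat_eq_tsum_of_gt_one (k := 3) (by norm_num)
      have e : riemannZeta 3 = ((∑' n : ℕ, 1 / (n : ℝ) ^ 3 : ℝ) : ℂ) := by
        push_cast at this ⊢
        exact this
      rw [e, Complex.ofReal_re]
    have := ((hasSum_nat_add_iff' 1).2 h1.hasSum).mul_left 2
    rw [h2]
    simpa [div_eq_mul_inv] using this
  exact integral_div_one_sub (f := fun w => Real.log w ^ 2)
    (fun n => (integral_pow_mul_log_sq n).1) (fun n => (integral_pow_mul_log_sq n).2)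
    (fun w _ => sq_nonneg _) hs

/-! ### Logarithmic integrals over `(0, 1/2)` -/

lemma abs_log_one_sub {w : ℝ} (h0 : 0 ≤ w) (h1 : w ≤ 1 / 2) : |Real.log (1 - w)| ≤ 2 * w := by
  have h := Real.one_sub_inv_le_log_of_pos (show 0 < 1 - w by linarith)
  have h2 : Real.log (1 - w) ≤ 0 := Real.log_nonpos (by linarith) (by linarith)
  have h3 : (1 - w)⁻¹ ≤ 1 + 2 * w := by
    rw [inv_le_iff_one_le_mul₀ (by linarith)]; nlinarith
  rw [abs_of_nonpos h2]; linarith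

lemma log_half : Real.log (1 - 1 / 2) = -Real.log 2 := by
  rw [show (1 : ℝ) - 1 / 2 = 2⁻¹ by norm_num, Real.log_inv]

lemma log_half' : Real.log (1 / 2) = -Real.log 2 := by
  rw [show (1 : ℝ) / 2 = 2⁻¹ by norm_num, Real.log_inv]

lemma intervalIntegrable_div_one_sub {f : ℝ → ℝ} (hf : IntervalIntegrable f volume 0 (1 / 2)) :
    IntervalIntegrable (fun w => f w / (1 - w)) volume 0 (1 / 2) := by
  have : ContinuousOn (fun w : ℝ => (1 - w)⁻¹) (Set.uIcc 0 (1 / 2)) := by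
    rw [Set.uIcc_of_le (by norm_num)]
    refine ContinuousOn.inv₀ (by fun_prop) fun w hw => ?_
    have := hw.2
    linarith
  simpa only [div_eq_mul_inv] using hf.mul_continuousOn this

lemma intervalIntegrable_of_bdd {f : ℝ → ℝ} {C : ℝ} (hf : Measurable f)
    (hb : ∀ w, 0 < w → w ≤ 1 / 2 → |f w| ≤ C) : IntervalIntegrable f volume 0 (1 / 2) := by
  rw [intervalIntegrable_iff_integrableOn_Ioc_of_le (by norm_num)]
  refine Measure.integrableOn_of_bounded (M := C) measure_Ioc_lt_top.ne hf.aestronglyMeasurable ?_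
  exact (ae_restrict_iff' measurableSet_Ioc).2 (Filter.Eventually.of_forall fun w hw =>
    hb w hw.1 hw.2)

lemma int_log : IntervalIntegrable Real.log volume 0 (1 / 2) :=
  intervalIntegral.intervalIntegrable_log'

lemma int_log_sq : IntervalIntegrable (fun w => Real.log w ^ 2) volume 0 (1 / 2) := by
  have := (integral_pow_mul_log_sq 0).1
  simp only [pow_zero, one_mul] at this
  refine this.mono_set ?_
  rw [Set.uIcc_of_le (by norm_num), Set.uIcc_of_le (by norm_num)]
  exact Set.Icc_subset_Icc_right (by norm_num)

lemma int_log_one_sub : IntervalIntegrable (fun w => Real.log (1 - w)) volume 0 (1 / 2) :=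
  intervalIntegrable_of_bdd (C := 1) (by fun_prop) fun w h0 h1 =>
    (abs_log_one_sub h0.le h1).trans (by linarith)

lemma int_log_mul_log :
    IntervalIntegrable (fun w => Real.log w * Real.log (1 - w)) volume 0 (1 / 2) := by
  refine int_log.mul_continuousOn ?_
  rw [Set.uIcc_of_le (by norm_num)]
  refine ContinuousOn.log (by fun_prop) fun w hw => ?_
  have := hw.2
  linarith

lemma int_log_one_sub_div (k : ℕ) :
    IntervalIntegrable (fun w => Real.log (1 - w) ^ (k + 1) / w) volume 0 (1 / 2) :=
  intervalIntegrable_of_bdd (C := 2) (by fun_prop) fun w h0 h1 => by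
    have h := abs_log_one_sub h0.le h1
    have h' : |Real.log (1 - w)| ^ k ≤ 1 := pow_le_one₀ (abs_nonneg _) (by linarith)
    rw [abs_div, abs_pow, abs_of_pos h0, div_le_iff₀ h0, pow_succ]
    have := abs_nonneg (Real.log (1 - w))
    nlinarith

/-- The reflection `w ↦ 1 - w` maps the part over `[1/2, 1]` to `[0, 1/2]`. -/
lemma split_integral (k : ℕ)
    (hi : IntervalIntegrable (fun w => Real.log w ^ (k + 1)) volume 0 (1 / 2)) :
    ∫ w in (0 : ℝ)..1, Real.log w ^ (k + 1) / (1 - w)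
      = (∫ w in (0 : ℝ)..(1 / 2), Real.log w ^ (k + 1) / (1 - w))
        + ∫ w in (0 : ℝ)..(1 / 2), Real.log (1 - w) ^ (k + 1) / w := by
  have h1 := (int_log_one_sub_div k).comp_sub_left 1
  simp only [sub_sub_cancel, sub_zero] at h1
  rw [show (1 : ℝ) - 1 / 2 = 1 / 2 by norm_num] at h1
  rw [← intervalIntegral.integral_add_adjacent_intervals (intervalIntegrable_div_one_sub hi) h1.symm]
  congr 1
  have := intervalIntegral.integral_comp_sub_left (a := 0) (b := 1 / 2)
    (fun w : ℝ => Real.log w ^ (k + 1) / (1 - w)) 1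
  simp only [sub_sub_cancel, sub_zero] at this
  rw [this, show (1 : ℝ) - 1 / 2 = 1 / 2 by norm_num]

lemma integral_one_sub_inv : ∫ w in (0 : ℝ)..(1 / 2), 1 / (1 - w) = Real.log 2 := by
  have hd : ∀ w ∈ Set.uIcc (0 : ℝ) (1 / 2), HasDerivAt (fun w => - Real.log (1 - w))
      (1 / (1 - w)) w := by
    intro w hw
    rw [Set.uIcc_of_le (by norm_num)] at hw
    have : 1 - w ≠ 0 := by linarith [hw.2]
    have := (((hasDerivAt_id w).const_sub 1).log this).neg
    refine this.congr_deriv ?_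
    simp only [id]
    field_simp
  rw [intervalIntegral.integral_eq_sub_of_hasDerivAt hd
    (intervalIntegrable_div_one_sub intervalIntegrable_const), log_half]
  simp

lemma integral_log_one_sub_div :
    ∫ w in (0 : ℝ)..(1 / 2), Real.log (1 - w) / (1 - w) = -(Real.log 2 ^ 2 / 2) := by
  have hd : ∀ w ∈ Set.uIcc (0 : ℝ) (1 / 2), HasDerivAt (fun w => - (Real.log (1 - w) ^ 2 / 2))
      (Real.log (1 - w) / (1 - w)) w := by
    intro w hw
    rw [Set.uIcc_of_le (by norm_num)] at hw
    have : 1 - w ≠ 0 := by linarith [hw.2]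
    have := (((((hasDerivAt_id w).const_sub 1).log this).pow 2).div_const 2).neg
    refine this.congr_deriv ?_
    simp only [id, Nat.cast_ofNat, Nat.add_one_sub_one, pow_one]
    field_simp
  rw [intervalIntegral.integral_eq_sub_of_hasDerivAt hd
    (intervalIntegrable_div_one_sub int_log_one_sub), log_half]
  simp

lemma tendsto_log_mul_log :
    Tendsto (fun w => Real.log w * Real.log (1 - w)) (𝓝[>] 0) (𝓝 0) := by
  have h : Tendsto (fun w : ℝ => 2 * |w * Real.log w|) (𝓝[>] 0) (𝓝 0) := by
    have : Continuous fun w : ℝ => 2 * |w * Real.log w| := by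
      have := Real.continuous_mul_log
      fun_prop
    have := this.tendsto 0
    simp only [zero_mul, abs_zero, mul_zero] at this
    exact this.mono_left nhdsWithin_le_nhds
  refine squeeze_zero_norm' ?_ h
  filter_upwards [Ioo_mem_nhdsGT (show (0 : ℝ) < 1 / 2 by norm_num)] with w hw
  rw [norm_mul, abs_mul, abs_of_pos hw.1, Real.norm_eq_abs, Real.norm_eq_abs]
  have := abs_log_one_sub hw.1.le hw.2.le
  have := abs_nonneg (Real.log w)
  nlinarith

/-- A dilogarithm value, from the derivative of `log w * log (1 - w)` and `split_integral`. -/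
lemma integral_K1 : 2 * ∫ w in (0 : ℝ)..(1 / 2), Real.log w / (1 - w)
    = -(π ^ 2 / 6) - Real.log 2 ^ 2 := by
  have h1 := split_integral 0 (by simp)
  have i2 := int_log_one_sub_div 0
  simp only [zero_add, pow_one] at h1 i2
  rw [integral_log_div] at h1
  have hd : ∀ w ∈ Set.Ioo (0 : ℝ) (1 / 2), HasDerivAt (fun w => Real.log w * Real.log (1 - w))
      (Real.log (1 - w) / w - Real.log w / (1 - w)) w := by
    intro w hw
    have h0 : w ≠ 0 := hw.1.ne'
    have h1 : 1 - w ≠ 0 := by linarith [hw.2]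
    refine ((Real.hasDerivAt_log h0).mul (((hasDerivAt_id w).const_sub 1).log h1)).congr_deriv ?_
    simp only [id]
    field_simp
    ring
  have ht : Tendsto (fun w => Real.log w * Real.log (1 - w)) (𝓝[<] (1 / 2))
      (𝓝 (Real.log (1 / 2) * Real.log (1 - 1 / 2))) := by
    have : ContinuousAt (fun w => Real.log w * Real.log (1 - w)) (1 / 2) := by
      refine ContinuousAt.mul (Real.continuousAt_log (by norm_num)) ?_
      exact ContinuousAt.log (by fun_prop) (by norm_num)
    exact this.tendsto.mono_left nhdsWithin_le_nhds
  have h2 := intervalIntegral.integral_eq_sub_of_hasDerivAt_of_tendsto (by norm_num) hd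
    (i2.sub (intervalIntegrable_div_one_sub int_log)) tendsto_log_mul_log ht
  rw [intervalIntegral.integral_sub i2 (intervalIntegrable_div_one_sub int_log), log_half,
    log_half'] at h2
  linarith

/-- A trilogarithm value, from the derivative of `log w * log (1 - w) ^ 2` and
`split_integral`. -/
lemma integral_K2 : 2 * (∫ w in (0 : ℝ)..(1 / 2), Real.log w * Real.log (1 - w) / (1 - w))
    + ∫ w in (0 : ℝ)..(1 / 2), Real.log w ^ 2 / (1 - w)
    = Real.log 2 ^ 3 + 2 * (riemannZeta 3).re := by
  have h1 := split_integral 1 (by simpa using int_log_sq)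
  have i2 := int_log_one_sub_div 1
  simp only [Nat.reduceAdd] at h1 i2
  rw [integral_log_sq_div] at h1
  have i3 := (intervalIntegrable_div_one_sub int_log_mul_log).const_mul 2
  have hd : ∀ w ∈ Set.Ioo (0 : ℝ) (1 / 2),
      HasDerivAt (fun w => Real.log w * Real.log (1 - w) * Real.log (1 - w))
      (Real.log (1 - w) ^ 2 / w - 2 * (Real.log w * Real.log (1 - w) / (1 - w))) w := by
    intro w hw
    have h0 : w ≠ 0 := hw.1.ne'
    have h1 : 1 - w ≠ 0 := by linarith [hw.2]
    have h2 := ((hasDerivAt_id w).const_sub 1).log h1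
    refine (((Real.hasDerivAt_log h0).mul h2).mul h2).congr_deriv ?_
    simp only [id, Pi.mul_apply]
    field_simp
    ring
  have hl : ContinuousAt (fun w : ℝ => Real.log (1 - w)) (1 / 2) :=
    ContinuousAt.log (by fun_prop) (by norm_num)
  have hl0 : ContinuousAt (fun w : ℝ => Real.log (1 - w)) 0 :=
    ContinuousAt.log (by fun_prop) (by norm_num)
  have ht : Tendsto (fun w => Real.log w * Real.log (1 - w) * Real.log (1 - w)) (𝓝[<] (1 / 2))
      (𝓝 (Real.log (1 / 2) * Real.log (1 - 1 / 2) * Real.log (1 - 1 / 2))) :=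
    (((Real.continuousAt_log (by norm_num)).mul hl).mul hl).tendsto.mono_left nhdsWithin_le_nhds
  have ht0 : Tendsto (fun w => Real.log w * Real.log (1 - w) * Real.log (1 - w)) (𝓝[>] 0)
      (𝓝 (0 * Real.log (1 - 0))) :=
    tendsto_log_mul_log.mul (hl0.tendsto.mono_left nhdsWithin_le_nhds)
  have h2 := intervalIntegral.integral_eq_sub_of_hasDerivAt_of_tendsto (by norm_num) hd
    (i2.sub i3) ht0 ht
  rw [intervalIntegral.integral_sub i2 i3, log_half, log_half', zero_mul,
    intervalIntegral.integral_const_mul] at h2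
  linarith

/-! ### Products of two and three primes -/

/-- Substitution `v = u w`. The pointwise hypothesis excludes `w = 0`, where `log` takes its junk
value. -/
lemma integral_scale {u : ℝ} {f g : ℝ → ℝ}
    (h : ∀ w, 0 < w → w ≤ 1 / 2 → u * f (u * w) = g w) :
    ∫ v in (0 : ℝ)..(u / 2), f v = ∫ w in (0 : ℝ)..(1 / 2), g w := by
  have h1 := intervalIntegral.mul_integral_comp_mul_left (a := 0) (b := 1 / 2) (f := f) u
  rw [mul_zero, show u * (1 / 2) = u / 2 by ring, ← intervalIntegral.integral_const_mul] at h1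
  rw [← h1]
  refine intervalIntegral.integral_congr_ae (Filter.Eventually.of_forall fun w hw => ?_)
  rw [Set.uIoc_of_le (by norm_num)] at hw
  exact h w hw.1 hw.2

/-- The main term `log v + c₁` of the distribution function of the primes. -/
noncomputable def main1 (v : ℝ) : ℝ := Real.log v + mertensC1

/-- The main term for products of two primes. -/
noncomputable def main2 (v : ℝ) : ℝ := main1 v ^ 2 - π ^ 2 / 6

lemma main1_half {u : ℝ} (hu : 0 < u) : main1 (u / 2) = main1 u - Real.log 2 := by
  unfold main1
  rw [Real.log_div hu.ne' (by norm_num)]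
  ring

lemma main1_mul {u w : ℝ} (hu : 0 < u) (hw : 0 < w) : main1 (u * w) = main1 u + Real.log w := by
  unfold main1
  rw [Real.log_mul hu.ne' hw.ne']
  ring

lemma main1_sub {u w : ℝ} (hu : 0 < u) (hw : w ≤ 1 / 2) :
    main1 (u - u * w) = main1 u + Real.log (1 - w) := by
  rw [← main1_mul hu (by linarith), mul_sub, mul_one]

lemma convMain_one {u : ℝ} (hu : 0 < u) :
    convMain main1 (fun v => 1 / v) main1 (fun v => 1 / v) u = main2 u := by
  have e : ∫ v in (0 : ℝ)..(u / 2), main1 v * (1 / (u - v))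
      = main1 u * Real.log 2 + ∫ w in (0 : ℝ)..(1 / 2), Real.log w / (1 - w) := by
    rw [integral_scale (g := fun w => main1 u * (1 / (1 - w)) + Real.log w / (1 - w)),
      intervalIntegral.integral_add
        ((intervalIntegrable_div_one_sub intervalIntegrable_const).const_mul _)
        (intervalIntegrable_div_one_sub int_log),
      intervalIntegral.integral_const_mul, integral_one_sub_inv]
    intro w h0 h1
    have : 1 - w ≠ 0 := by linarith
    have h2 : u - u * w = u * (1 - w) := by ring
    rw [main1_mul hu h0, h2]
    field_simp
  unfold convMain main2
  rw [e, main1_half hu]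
  linear_combination integral_K1

lemma convMain_two {u : ℝ} (hu : 0 < u) :
    convMain main1 (fun v => 1 / v) main2 (fun v => 2 * main1 v / v) u
      = main1 u ^ 3 - π ^ 2 / 2 * main1 u + 2 * (riemannZeta 3).re := by
  have i0 := intervalIntegrable_div_one_sub (f := fun _ => 1) intervalIntegrable_const
  have i1 := intervalIntegrable_div_one_sub int_log
  have i2 := intervalIntegrable_div_one_sub int_log_one_sub
  have i3 := intervalIntegrable_div_one_sub int_log_mul_log
  have i4 := intervalIntegrable_div_one_sub int_log_sq
  have e1 : ∫ v in (0 : ℝ)..(u / 2), main1 v * (2 * main1 (u - v) / (u - v))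
      = 2 * main1 u ^ 2 * Real.log 2
        + 2 * main1 u * (∫ w in (0 : ℝ)..(1 / 2), Real.log w / (1 - w))
        + 2 * main1 u * (-(Real.log 2 ^ 2 / 2))
        + 2 * ∫ w in (0 : ℝ)..(1 / 2), Real.log w * Real.log (1 - w) / (1 - w) := by
    rw [integral_scale (g := fun w => 2 * main1 u ^ 2 * (1 / (1 - w))
        + 2 * main1 u * (Real.log w / (1 - w)) + 2 * main1 u * (Real.log (1 - w) / (1 - w))
        + 2 * (Real.log w * Real.log (1 - w) / (1 - w))),
      intervalIntegral.integral_add (((i0.const_mul _).add (i1.const_mul _)).add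
        (i2.const_mul _)) (i3.const_mul _),
      intervalIntegral.integral_add ((i0.const_mul _).add (i1.const_mul _)) (i2.const_mul _),
      intervalIntegral.integral_add (i0.const_mul _) (i1.const_mul _)]
    · simp only [intervalIntegral.integral_const_mul, integral_one_sub_inv,
        integral_log_one_sub_div]
    intro w h0 h1
    have : 1 - w ≠ 0 := by linarith
    have h2 : u - u * w = u * (1 - w) := by ring
    rw [main1_mul hu h0, main1_sub hu h1, h2]
    field_simp
    ring
  have e2 : ∫ v in (0 : ℝ)..(u / 2), main2 v * (1 / (u - v))
      = (main1 u ^ 2 - π ^ 2 / 6) * Real.log 2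
        + 2 * main1 u * (∫ w in (0 : ℝ)..(1 / 2), Real.log w / (1 - w))
        + ∫ w in (0 : ℝ)..(1 / 2), Real.log w ^ 2 / (1 - w) := by
    rw [integral_scale (g := fun w => (main1 u ^ 2 - π ^ 2 / 6) * (1 / (1 - w))
        + 2 * main1 u * (Real.log w / (1 - w)) + Real.log w ^ 2 / (1 - w)),
      intervalIntegral.integral_add ((i0.const_mul _).add (i1.const_mul _)) i4,
      intervalIntegral.integral_add (i0.const_mul _) (i1.const_mul _)]
    · simp only [intervalIntegral.integral_const_mul, integral_one_sub_inv]
    intro w h0 h1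
    have : 1 - w ≠ 0 := by linarith
    have h2 : u - u * w = u * (1 - w) := by ring
    unfold main2
    rw [main1_mul hu h0, h2]
    field_simp
    ring
  have h : convMain main1 (fun v => 1 / v) main2 (fun v => 2 * main1 v / v) u
      = main1 (u / 2) * main2 (u / 2)
        + (∫ v in (0 : ℝ)..(u / 2), main1 v * (2 * main1 (u - v) / (u - v)))
        + ∫ v in (0 : ℝ)..(u / 2), main2 v * (1 / (u - v)) := rfl
  rw [h, e1, e2]
  unfold main2
  rw [main1_half hu]
  linear_combination 2 * main1 u * integral_K1 + integral_K2

lemma abs_log_le_ell {v : ℝ} (hv : 1 / 2 ≤ v) : |Real.log v| ≤ ell v := by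
  have h1 : 0 ≤ Real.log (1 + v) := Real.log_nonneg (by linarith)
  have h2 : Real.log v ≤ Real.log (1 + v) := Real.log_le_log (by linarith) (by linarith)
  have h3 : Real.log (1 / 2) ≤ Real.log v := Real.log_le_log (by norm_num) hv
  rw [log_half'] at h3
  have := Real.log_two_lt_d9
  unfold ell
  rw [abs_le]
  constructor <;> linarith

lemma hasDerivAt_main1 {v : ℝ} (hv : 1 / 2 ≤ v) : HasDerivAt main1 (1 / v) v := by
  have := (Real.hasDerivAt_log (show v ≠ 0 by linarith)).add_const mertensC1
  rwa [← one_div] at this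

lemma approx_P : ∃ C : ℝ, 1 ≤ C ∧ Approx P main1 (fun v => 1 / v) 0 C := by
  obtain ⟨K, hK0, hK⟩ := mertens_P
  have hc := abs_nonneg mertensC1
  refine ⟨K + 1 + |mertensC1|, by linarith, by positivity, fun v hv => ?_, fun v hv => ?_,
    fun v hv => hasDerivAt_main1 hv, fun v hv => ?_, ?_, fun h _ => ?_⟩
  · have := Real.sqrt_nonneg v
    refine (hK v hv).trans ?_
    rw [pow_zero, mul_one]
    gcongr
    linarith
  · have h1 := abs_log_le_ell hv
    have h2 : 1 ≤ ell v := one_le_ell (by linarith)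
    have := abs_add_le (Real.log v) mertensC1
    unfold main1
    rw [zero_add, pow_one]
    nlinarith
  · have hv0 : 0 < v := by linarith
    rw [abs_of_pos (by positivity), pow_zero, mul_one]
    gcongr
    linarith
  · refine ContinuousOn.div continuousOn_const continuousOn_id fun v hv => ?_
    have : 1 / 2 ≤ v := hv
    linarith
  · exact intervalIntegral.intervalIntegrable_log'.add intervalIntegrable_const

lemma log_sq_mul_sqrt {v : ℝ} (h0 : 0 < v) (h1 : v ≤ 1) : Real.log v ^ 2 * √v ≤ 16 := by
  have h := abs_log_le_sqrt (Real.sqrt_pos.2 h0) (Real.sqrt_le_one.2 h1)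
  rw [Real.log_sqrt h0.le] at h
  have h2 : √v = √√v ^ 2 := (Real.sq_sqrt (Real.sqrt_nonneg v)).symm
  have h3 : Real.log v ^ 2 * √v = 4 * (|Real.log v / 2| * √√v) ^ 2 := by
    rw [mul_pow, sq_abs, ← h2]; ring
  rw [h3]
  have : (|Real.log v / 2| * √√v) ^ 2 ≤ 2 ^ 2 := pow_le_pow_left₀ (by positivity) h 2
  linarith

lemma cdf_PP_eq_zero {v : ℝ} (h : v < 1) : (P.conv P).cdf v = 0 := by
  refine WFam.cdf_eq_zero _ fun k => ?_
  have h1 := log_two_le_log_prime k.1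
  have h2 := log_two_le_log_prime k.2
  have := Real.log_two_gt_d9
  change v < Real.log (k.1 : ℝ) + Real.log (k.2 : ℝ)
  linarith

lemma pi_sq_div_six_le : π ^ 2 / 6 ≤ 2 := by
  have := Real.pi_lt_d2
  have := Real.pi_pos
  nlinarith

/-- The distribution function for two primes; this is `conv_err` on `[1, ∞)`, while on `(0, 1)` there
are no points and `log² v` is absorbed by `1 / √v`. -/
lemma approx_PP : ∃ C : ℝ, Approx (P.conv P) main2 (fun v => 2 * main1 v / v) 1 C := by
  obtain ⟨C, hC1, hP⟩ := approx_P
  have hc := sq_nonneg mertensC1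
  have hpi : 0 ≤ π ^ 2 / 6 := by positivity
  have hpi2 := pi_sq_div_six_le
  -- `48 C²` comes from `conv_err` (with `√v + v ≤ 2 v` for `v ≥ 1`), and `68 + 4 c₁²` bounds
  -- `|main2 v| (√v + v)` on `(0, 1)`.
  refine ⟨48 * C ^ 2 + 68 + 4 * mertensC1 ^ 2, by positivity, fun v hv => ?_, fun v hv => ?_,
    fun v hv => ?_, fun v hv => ?_, ?_, fun h hh => ?_⟩
  · have hs : 0 < √v := Real.sqrt_pos.2 hv
    have hl : 1 ≤ ell v := one_le_ell hv.le
    rcases le_or_gt 1 v with h1 | h1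
    · have := hP.conv_err hP h1
      rw [convMain_one hv] at this
      refine this.trans ?_
      have hsv : √v ≤ v := by rw [Real.sqrt_le_left hv.le]; nlinarith
      rw [le_div_iff₀ (by positivity), zero_add, pow_one]
      calc _ ≤ 24 * C * C * (ell v / v) * (v + v) := by gcongr
        _ = 48 * C ^ 2 * ell v := by field_simp; ring
        _ ≤ _ := by gcongr; linarith
    · have h2 := log_sq_mul_sqrt hv h1.le
      have hsv : v ≤ √v := Real.le_sqrt_of_sq_le (by nlinarith)
      have hs1 : √v ≤ 1 := Real.sqrt_le_one.2 h1.le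
      rw [cdf_PP_eq_zero h1, zero_sub, abs_neg, le_div_iff₀ (by positivity), pow_one]
      have h3 : |main2 v| ≤ 2 * Real.log v ^ 2 + 2 * mertensC1 ^ 2 + 2 := by
        have h4 : main1 v ^ 2 ≤ 2 * Real.log v ^ 2 + 2 * mertensC1 ^ 2 := by
          unfold main1; nlinarith [sq_nonneg (Real.log v - mertensC1)]
        unfold main2
        rw [abs_le]
        constructor <;> nlinarith [sq_nonneg (main1 v), sq_nonneg (Real.log v)]
      calc _ ≤ (2 * Real.log v ^ 2 + 2 * mertensC1 ^ 2 + 2) * (√v + √v) := by gcongr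
        _ ≤ 68 + 4 * mertensC1 ^ 2 := by nlinarith
        _ ≤ (48 * C ^ 2 + 68 + 4 * mertensC1 ^ 2) * 1 := by nlinarith
        _ ≤ _ := by gcongr
  · have h1 := hP.bound v hv
    have hl : 1 ≤ ell v := one_le_ell (by linarith)
    rw [zero_add, pow_one] at h1
    have h2 : main1 v ^ 2 ≤ C ^ 2 * ell v ^ 2 := by
      rw [← mul_pow, ← sq_abs]; exact pow_le_pow_left₀ (abs_nonneg _) h1 2
    have h3 : 1 ≤ ell v ^ 2 := one_le_pow₀ hl
    have h4 : 0 ≤ C ^ 2 * ell v ^ 2 := by positivity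
    have h5 : 0 ≤ mertensC1 ^ 2 * ell v ^ 2 := by positivity
    unfold main2
    simp only [Nat.reduceAdd]
    rw [abs_le]
    constructor <;> nlinarith [sq_nonneg (main1 v)]
  · have := ((hasDerivAt_main1 hv).pow 2).sub_const (π ^ 2 / 6)
    refine this.congr_deriv ?_
    simp only [Nat.cast_ofNat, Nat.add_one_sub_one, pow_one]
    ring
  · have hv0 : 0 < v := by linarith
    have h1 := hP.bound v hv
    have hl : 1 ≤ ell v := one_le_ell (by linarith)
    rw [zero_add, pow_one] at h1
    rw [abs_div, abs_mul, abs_of_pos hv0, abs_two, pow_one]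
    refine div_le_div_of_nonneg_right ?_ hv0.le
    have h2 : C ≤ C ^ 2 := by nlinarith
    calc 2 * |main1 v| ≤ 2 * C * ell v := by linarith
      _ ≤ _ := mul_le_mul_of_nonneg_right (by nlinarith) (by linarith)
  · have h0 : ∀ v ∈ Set.Ici (1 / 2 : ℝ), v ≠ 0 := fun v hv => by
      have : 1 / 2 ≤ v := hv
      linarith
    refine ContinuousOn.div (continuousOn_const.mul ?_) continuousOn_id h0
    exact (ContinuousOn.log continuousOn_id h0).add continuousOn_const
  · have hl2 : IntervalIntegrable (fun v => Real.log v ^ 2) volume 0 h := by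
      refine int_log_sq.trans (ContinuousOn.intervalIntegrable ?_)
      refine (ContinuousOn.log continuousOn_id fun v hv => ?_).pow 2
      have := (Set.mem_uIcc.1 hv)
      simp only [id]
      rcases this with h | h <;> linarith [h.1]
    have hl1 : IntervalIntegrable Real.log volume 0 h := intervalIntegral.intervalIntegrable_log'
    have := (hl2.add (hl1.const_mul (2 * mertensC1))).add
      (intervalIntegrable_const (c := mertensC1 ^ 2 - π ^ 2 / 6))
    refine this.congr (fun v _ => ?_)
    simp only [main2, main1]
    ring

/-- Triples of primes, as nested pairs. -/
def tripleEquiv {α : Type} : α × (α × α) ≃ (Fin 3 → α) where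
  toFun t := ![t.1, t.2.1, t.2.2]
  invFun v := (v 0, v 1, v 2)
  left_inv t := rfl
  right_inv v := by ext i; fin_cases i <;> rfl

/-- `S₃(x)` is the distribution function of the triple convolution of the primes at `log x`. -/
lemma mertensS_three {x : ℝ} (hx : 0 < x) :
    mertensS 3 x = (P.conv (P.conv P)).cdf (Real.log x) := by
  unfold mertensS WFam.cdf
  rw [← tripleEquiv.tsum_eq]
  have key : ∀ t : Nat.Primes × (Nat.Primes × Nat.Primes),
      (∏ i, (((tripleEquiv t i : Nat.Primes) : ℕ) : ℝ)) ≤ x ↔ t ∈ (P.conv (P.conv P)).trunc (Real.log x) := by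
    intro t
    have h1 : (0 : ℝ) < (t.1 : ℕ) := by exact_mod_cast t.1.2.pos
    have h2 : (0 : ℝ) < (t.2.1 : ℕ) := by exact_mod_cast t.2.1.2.pos
    have h3 : (0 : ℝ) < (t.2.2 : ℕ) := by exact_mod_cast t.2.2.2.pos
    rw [WFam.mem_trunc, Fin.prod_univ_three]
    change ((t.1 : ℕ) : ℝ) * ((t.2.1 : ℕ) : ℝ) * ((t.2.2 : ℕ) : ℝ) ≤ x ↔
      Real.log (t.1 : ℕ) + (Real.log (t.2.1 : ℕ) + Real.log (t.2.2 : ℕ)) ≤ Real.log x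
    rw [← Real.log_mul h2.ne' h3.ne', ← Real.log_mul h1.ne' (by positivity), mul_assoc,
      Real.log_le_log_iff (by positivity) hx]
  rw [tsum_eq_sum (s := (P.conv (P.conv P)).trunc (Real.log x))
    fun t ht => if_neg fun h => ht ((key t).1 h)]
  refine Finset.sum_congr rfl fun t ht => ?_
  rw [if_pos ((key t).2 ht), Fin.prod_univ_three]
  change 1 / (((t.1 : ℕ) : ℝ) * ((t.2.1 : ℕ) : ℝ) * ((t.2.2 : ℕ) : ℝ))
    = 1 / ((t.1 : ℕ) : ℝ) * (1 / ((t.2.1 : ℕ) : ℝ) * (1 / ((t.2.2 : ℕ) : ℝ)))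
  rw [mul_assoc, one_div_mul_one_div, one_div_mul_one_div]

lemma log_three_gt_one : 1 < Real.log 3 := by
  rw [Real.lt_log_iff_exp_lt (by norm_num)]
  exact Real.exp_one_lt_d9.trans (by norm_num)

/-- On `[log 3, ∞)` the scale `ell u` is comparable with `log u`. -/
lemma ell_le_mul_log : ∃ K : ℝ, 0 ≤ K ∧ ∀ u : ℝ, Real.log 3 ≤ u → ell u ≤ K * Real.log u := by
  have h1 := log_three_gt_one
  have h0 : 0 < Real.log (Real.log 3) := Real.log_pos h1
  have h2 : 0 ≤ Real.log 2 := Real.log_nonneg (by norm_num)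
  refine ⟨1 + (1 + Real.log 2) / Real.log (Real.log 3), by positivity, fun u hu => ?_⟩
  have h3 : Real.log (Real.log 3) ≤ Real.log u := Real.log_le_log (by linarith) hu
  have h4 : Real.log (1 + u) ≤ Real.log 2 + Real.log u := by
    rw [← Real.log_mul (by norm_num) (by linarith)]
    exact Real.log_le_log (by linarith) (by linarith)
  have h5 : 1 + Real.log 2 ≤ (1 + Real.log 2) / Real.log (Real.log 3) * Real.log u := by
    rw [div_mul_eq_mul_div, le_div_iff₀ h0]
    gcongr
  unfold ell
  linarith

end MertensProof

theorem mertens_S3 :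
    ∃ C : ℝ, ∀ x : ℝ, 3 ≤ x →
      |mertensS 3 x -
          ((Real.log (Real.log x) + mertensC1) ^ 3
            - Real.pi ^ 2 / 2 * (Real.log (Real.log x) + mertensC1)
            + 2 * (riemannZeta 3).re)| ≤
        C * (Real.log (Real.log x)) ^ 2 / Real.log x := by
  obtain ⟨C₁, -, h₁⟩ := MertensProof.approx_P
  obtain ⟨C₂, h₂⟩ := MertensProof.approx_PP
  obtain ⟨K, hK0, hK⟩ := MertensProof.ell_le_mul_log
  have hC₁ := h₁.C_nonneg
  have hC₂ := h₂.C_nonneg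
  -- The error of `conv_err` is `24 C₁ C₂ ell(u)² / u` with `u = log x`, and `ell u ≤ K log u`.
  refine ⟨24 * C₁ * C₂ * K ^ 2, fun x hx => ?_⟩
  have hu : Real.log 3 ≤ Real.log x := Real.log_le_log (by norm_num) hx
  have hu1 : 1 ≤ Real.log x := MertensProof.log_three_gt_one.le.trans hu
  have h := h₁.conv_err h₂ hu1
  rw [MertensProof.convMain_two (by linarith), ← MertensProof.mertensS_three (by linarith)] at h
  refine h.trans ?_
  have hl : MertensProof.ell (Real.log x) ^ 2 ≤ (K * Real.log (Real.log x)) ^ 2 :=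
    pow_le_pow_left₀ (zero_le_one.trans (MertensProof.one_le_ell (by linarith))) (hK _ hu) 2
  calc _ ≤ 24 * C₁ * C₂ * ((K * Real.log (Real.log x)) ^ 2 / Real.log x) := by
        gcongr
    _ = _ := by ring
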